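/- arXiv:1001.2638 — 4 statements merged into one kernel-verified Lean document; each statement's English description precedes it below -/
import Mathlib

section
/- Let p be a prime with p ≡ 3 (mod 4). Then M(p) = Σ_{k=1}^{p-1} (k/p)·k < 0; that is, among the numbers 1, 2, …, p−1, the sum of the quadratic non-residues mod p is greater than the sum of the quadratic residues mod p. -/
/-!
Let `χ` be the Legendre symbol modulo `p ≡ 3 mod 4` and `τ` its Gauss sum. The finite Fourier
transform of `k ↦ k` on `ZMod p` is, up to a constant, a cotangent, and so is the odd part of the
Hurwitz zeta function at `s = 1`. Comparing the two gives `τ M(p) = -(i p² / π) L(1, χ)`. Since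
`τ = i √p`, this reads `M(p) = -(p √p / π) L(1, χ)`, and `L(1, χ) > 0` because the Euler product
makes `L(s, χ)` nonnegative for `s > 1` and `L(1, χ) ≠ 0`.

The sign of `τ` comes from the asymptotics of the Jacobi theta function at rational points, where
quadratic Gauss sums are the leading coefficients: its functional equation relates the Gauss sum
modulo `p` to an explicit one modulo `4`.
-/

section

open Complex Filter Topology

section Theta

theorem tendsto_jacobiTheta₂_of_tendsto_im_atTop {ι : Type*} {l : Filter ι} {τ : ι → ℂ} (z : ℂ)
    (hτ : Tendsto (fun i ↦ (τ i).im) l atTop) :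
    Tendsto (fun i ↦ jacobiTheta₂ z (τ i)) l (𝓝 1) := by
  have hbound := summable_pow_mul_jacobiTheta₂_term_bound |z.im| one_pos 0
  have hterm (n : ℤ) : Tendsto (fun i ↦ jacobiTheta₂_term n z (τ i)) l
      (𝓝 (if n = 0 then 1 else 0)) := by
    split_ifs with hn
    · simpa [jacobiTheta₂_term, hn] using tendsto_const_nhds
    · have hneg : -Real.pi * (n : ℝ) ^ 2 < 0 := by
        rw [neg_mul, neg_lt_zero]; positivity
      rw [tendsto_zero_iff_norm_tendsto_zero]
      simp_rw [norm_jacobiTheta₂_term]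
      exact Real.tendsto_exp_atBot.comp
        (tendsto_atBot_add_const_right _ _ (hτ.const_mul_atTop_of_neg hneg))
  have hsum := tendsto_tsum_of_dominated_convergence hbound hterm <| by
    filter_upwards [hτ.eventually_ge_atTop 1] with i hi n
    simpa using norm_jacobiTheta₂_term_le one_pos le_rfl hi n
  simpa [jacobiTheta₂] using hsum

theorem hasSum_cexp_sq_add {t : ℂ} (ht : 0 < t.im) (z : ℂ) :
    HasSum (fun n : ℤ ↦ cexp (Real.pi * I * (n + z) ^ 2 * t))
      (1 / (-I * t) ^ (1 / 2 : ℂ) * jacobiTheta₂ z (-1 / t)) := by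
  have ht0 : t ≠ 0 := by rintro rfl; simp at ht
  have h := (hasSum_jacobiTheta₂_term (z * t) ht).mul_left (cexp (Real.pi * I * z ^ 2 * t))
  convert! h using 1
  · funext n
    rw [jacobiTheta₂_term, ← Complex.exp_add]
    ring_nf
  · have hexp : Real.pi * I * z ^ 2 * t + -Real.pi * I * (z * t) ^ 2 / t = 0 := by
      field_simp; ring
    rw [jacobiTheta₂_functional_equation (z * t), mul_div_cancel_right₀ _ ht0, mul_assoc (1 / _),
      mul_left_comm, ← mul_assoc (cexp _), ← Complex.exp_add, hexp, Complex.exp_zero, one_mul]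

theorem ofReal_mul_cpow_of_pos {r : ℝ} (hr : 0 < r) {z : ℂ} (hz : z ≠ 0) (s : ℂ) :
    ((r : ℂ) * z) ^ s = (r : ℂ) ^ s * z ^ s := by
  have hr' : (r : ℂ) ≠ 0 := mod_cast hr.ne'
  rw [cpow_def_of_ne_zero (mul_ne_zero hr' hz), cpow_def_of_ne_zero hr', cpow_def_of_ne_zero hz,
    log_ofReal_mul hr hz, ← Complex.exp_add, ofReal_log hr.le, add_mul]

end Theta

section QuadraticGaussSum

theorem sum_zmod_eq_sum_range {M : Type*} [AddCommMonoid M] (N : ℕ) [NeZero N] (f : ZMod N → M) :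
    ∑ a : ZMod N, f a = ∑ k ∈ Finset.range N, f k := by
  refine Finset.sum_nbij' ZMod.val Nat.cast ?_ ?_ ?_ ?_ ?_
  · exact fun a _ ↦ Finset.mem_range.mpr a.val_lt
  · exact fun _ _ ↦ Finset.mem_univ _
  · exact fun a _ ↦ ZMod.natCast_zmod_val a
  · exact fun k hk ↦ ZMod.val_cast_of_lt (Finset.mem_range.mp hk)
  · exact fun a _ ↦ by rw [ZMod.natCast_zmod_val]

/-- The quadratic Gauss sum `∑ exp (2πi h a² / N)`, taken over the residues `a` modulo `N`. The
integer `h` need not be coprime to `N`. -/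
noncomputable def quadraticGaussSum (N : ℕ) [NeZero N] (h : ℤ) : ℂ :=
  ∑ a : ZMod N, ZMod.stdAddChar ((h : ZMod N) * a ^ 2)

theorem jacobiTheta₂_term_zero_add (N : ℕ) [NeZero N] (h n : ℤ) (t : ℂ) :
    jacobiTheta₂_term n 0 (2 * h / N + t) =
      ZMod.stdAddChar ((h : ZMod N) * (n : ZMod N) ^ 2) * cexp (Real.pi * I * n ^ 2 * t) := by
  have hcast : (h : ZMod N) * (n : ZMod N) ^ 2 = ((h * n ^ 2 : ℤ) : ZMod N) := by push_cast; rfl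
  rw [hcast, ZMod.stdAddChar_coe, jacobiTheta₂_term, ← Complex.exp_add]
  congr 1
  push_cast
  ring

-- On the class `n ≡ a mod N` the factor `exp (2πi h n² / N)` is constant, so the functional
-- equation can be applied to each class separately.
theorem jacobiTheta₂_zero_rational_add (N : ℕ) [NeZero N] (h : ℤ) {t : ℂ} (ht : 0 < t.im) :
    jacobiTheta₂ 0 (2 * h / N + t) = 1 / (-I * ((N : ℂ) ^ 2 * t)) ^ (1 / 2 : ℂ) *
      ∑ a : ZMod N, ZMod.stdAddChar ((h : ZMod N) * a ^ 2) *
        jacobiTheta₂ (a.val / N) (-1 / (N ^ 2 * t)) := by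
  have hN : (N : ℂ) ≠ 0 := mod_cast NeZero.ne N
  have hNt : 0 < ((N : ℂ) ^ 2 * t).im := by
    rw [← ofReal_natCast, ← ofReal_pow, im_ofReal_mul]
    have hN0 := NeZero.pos N
    positivity
  have hτ : 0 < (2 * h / N + t).im := by
    rw [show (2 * h / N : ℂ) = ((2 * h / N : ℝ) : ℂ) by push_cast; rfl, add_im, ofReal_im]
    simpa using ht
  have hsum := ((Equiv.prodComm (Fin N) ℤ).trans (Int.divModEquiv N).symm).hasSum_iff.mpr
    (hasSum_jacobiTheta₂_term 0 hτ)
  have hres (k : Fin N) : HasSum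
      (fun n : ℤ ↦ jacobiTheta₂_term (n * N + k) 0 (2 * h / N + t))
      (ZMod.stdAddChar ((h : ZMod N) * (k : ZMod N) ^ 2) *
        (1 / (-I * ((N : ℂ) ^ 2 * t)) ^ (1 / 2 : ℂ) *
          jacobiTheta₂ (k / N) (-1 / (N ^ 2 * t)))) := by
    convert! (hasSum_cexp_sq_add hNt (k / N)).mul_left _ using 2 with n
    rw [jacobiTheta₂_term_zero_add]
    congr 2
    · simp
    · push_cast; field_simp
  rw [(hsum.prod_fiberwise hres).unique (hasSum_fintype _), sum_zmod_eq_sum_range,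
    Finset.sum_range, Finset.mul_sum]
  refine Finset.sum_congr rfl fun k _ ↦ ?_
  rw [ZMod.val_cast_of_lt k.isLt, mul_left_comm]

theorem tendsto_cpow_mul_jacobiTheta₂_rational (N : ℕ) [NeZero N] (h : ℤ) {ι : Type*}
    {l : Filter ι} {t : ι → ℂ} (ht : Tendsto (fun i ↦ (-1 / t i).im) l atTop) :
    Tendsto (fun i ↦ (-I * t i) ^ (1 / 2 : ℂ) * jacobiTheta₂ 0 (2 * h / N + t i)) l
      (𝓝 (quadraticGaussSum N h / N)) := by
  have hNpos : (0 : ℝ) < N := mod_cast NeZero.pos N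
  have hlim : Tendsto (fun i ↦ (∑ a : ZMod N, ZMod.stdAddChar ((h : ZMod N) * a ^ 2) *
      jacobiTheta₂ (a.val / N) (-1 / (N ^ 2 * t i))) / N) l (𝓝 (quadraticGaussSum N h / N)) := by
    refine Tendsto.div_const (tendsto_finsetSum _ fun a _ ↦ ?_) _
    suffices hcusp : Tendsto (fun i ↦ (-1 / ((N : ℂ) ^ 2 * t i)).im) l atTop by
      simpa using (tendsto_jacobiTheta₂_of_tendsto_im_atTop (a.val / N) hcusp).const_mul
        (ZMod.stdAddChar ((h : ZMod N) * a ^ 2))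
    have him (i : ι) : (-1 / ((N : ℂ) ^ 2 * t i)).im = ((N : ℝ) ^ 2)⁻¹ * (-1 / t i).im := by
      rw [← im_ofReal_mul]; push_cast; congr 1; ring
    simp_rw [him]
    exact ht.const_mul_atTop (by positivity)
  refine hlim.congr' ?_
  filter_upwards [ht.eventually_gt_atTop 0] with i hi
  have hti : 0 < (t i).im := by
    rw [neg_div, neg_im, one_div, inv_im, neg_div, neg_neg] at hi
    exact (div_pos_iff_of_pos_right (normSq_pos.mpr fun h0 ↦ by simp [h0] at hi)).mp hi
  have ht0 : -I * t i ≠ 0 := mul_ne_zero (neg_ne_zero.mpr I_ne_zero) fun h0 ↦ by simp [h0] at hti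
  have hsqrt : (-I * ((N : ℂ) ^ 2 * t i)) ^ (1 / 2 : ℂ) = N * (-I * t i) ^ (1 / 2 : ℂ) := by
    rw [mul_left_comm, ← ofReal_natCast, ← ofReal_pow, ofReal_mul_cpow_of_pos (by positivity) ht0,
      ofReal_pow, one_div, sq_cpow_two_inv (by simpa using hNpos)]
  have hne : (-I * t i) ^ (1 / 2 : ℂ) ≠ 0 := cpow_ne_zero_iff.mpr (.inl ht0)
  rw [jacobiTheta₂_zero_rational_add N h hti, hsqrt]
  generalize (-I * t i) ^ (1 / 2 : ℂ) = w at hne ⊢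
  field_simp

theorem tendsto_cpow_mul_jacobiTheta₂_vertical (N : ℕ) [NeZero N] (h : ℤ) :
    Tendsto (fun ε : ℝ ↦ (ε : ℂ) ^ (1 / 2 : ℂ) * jacobiTheta₂ 0 (2 * h / N + I * ε)) (𝓝[>] 0)
      (𝓝 (quadraticGaussSum N h / N)) := by
  have hcusp : Tendsto (fun ε : ℝ ↦ (-1 / (I * ε)).im) (𝓝[>] 0) atTop := by
    refine tendsto_inv_nhdsGT_zero.congr fun ε ↦ ?_
    rw [show -1 / (I * ε) = ((ε⁻¹ : ℝ) : ℂ) * I by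
      rw [← div_div, neg_div, one_div, inv_I, neg_neg, ofReal_inv, div_eq_inv_mul]]
    simp
  refine (tendsto_cpow_mul_jacobiTheta₂_rational N h hcusp).congr fun ε ↦ ?_
  rw [neg_mul, ← mul_assoc, I_mul_I, neg_one_mul, neg_neg]

theorem tendsto_neg_add_I_mul (c : ℝ) :
    Tendsto (fun ε : ℝ ↦ -(c : ℂ) + I * ε) (𝓝[>] 0) (𝓝 (-c)) := by
  have hcont : Continuous fun ε : ℝ ↦ -(c : ℂ) + I * ε := by fun_prop
  simpa using (hcont.tendsto 0).mono_left nhdsWithin_le_nhds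

theorem neg_add_I_mul_ne_zero {c : ℝ} (hc : 0 < c) (ε : ℝ) : -(c : ℂ) + I * ε ≠ 0 := fun h ↦ by
  have hre := congrArg re h
  simp [hc.ne'] at hre

theorem tendsto_neg_one_div_cpow {c : ℝ} (hc : 0 < c) :
    Tendsto (fun ε : ℝ ↦ (-1 / (c * (-c + I * ε)) : ℂ) ^ (1 / 2 : ℂ)) (𝓝[>] 0) (𝓝 (1 / c)) := by
  have hcC : (c : ℂ) ≠ 0 := mod_cast hc.ne'
  have hsq : -1 / ((c : ℂ) * -c) = (1 / c) ^ 2 := by field_simp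
  have hpos : 0 < (1 / c : ℂ).re := by rw [← ofReal_one, ← ofReal_div, ofReal_re]; positivity
  have hslit : -1 / ((c : ℂ) * -c) ∈ slitPlane := by
    rw [hsq, ← ofReal_one, ← ofReal_div, ← ofReal_pow, ofReal_mem_slitPlane]; positivity
  have hbase := (tendsto_const_nhds (x := (-1 : ℂ))).div
    ((tendsto_neg_add_I_mul c).const_mul (c : ℂ)) (mul_ne_zero hcC (neg_ne_zero.mpr hcC))
  have hcpow := (continuousAt_cpow_const (b := (1 / 2 : ℂ)) hslit).tendsto.comp hbase
  rw [hsq, one_div (2 : ℂ), sq_cpow_two_inv hpos] at hcpow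
  simpa only [one_div (2 : ℂ), Function.comp_def, Pi.div_apply] using hcpow

-- `-1 / (-c + iε) = 2h/N + t` with `t = -iε / (c (-c + iε))`, so the point approaches `2h/N` along
-- a circular arc, not a vertical line.
theorem tendsto_cpow_mul_jacobiTheta₂_neg_inv (N : ℕ) [NeZero N] (h : ℤ) {c : ℝ} (hc : 0 < c)
    (hcN : (2 * h / N : ℂ) = 1 / c) :
    Tendsto (fun ε : ℝ ↦ (ε : ℂ) ^ (1 / 2 : ℂ) * jacobiTheta₂ 0 (-1 / (-c + I * ε))) (𝓝[>] 0)
      (𝓝 (quadraticGaussSum N h / N * c)) := by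
  have hcC : (c : ℂ) ≠ 0 := mod_cast hc.ne'
  have hcusp : Tendsto (fun ε : ℝ ↦ (-1 / (-I * ε / (c * (-c + I * ε)))).im) (𝓝[>] 0) atTop := by
    refine (tendsto_inv_nhdsGT_zero.const_mul_atTop (pow_pos hc 2)).congr' ?_
    filter_upwards [self_mem_nhdsWithin] with ε (hε : 0 < ε)
    have hεC : (ε : ℂ) ≠ 0 := mod_cast hε.ne'
    have hdecomp : -1 / (-I * ε / (c * (-c + I * ε))) = ((c ^ 2 * ε⁻¹ : ℝ) : ℂ) * I + c := by
      push_cast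
      field_simp
      linear_combination -c * I_sq
    rw [hdecomp, add_im, im_ofReal_mul, I_im, ofReal_im, mul_one, add_zero]
  have hlim := (tendsto_cpow_mul_jacobiTheta₂_rational N h hcusp).div
    (tendsto_neg_one_div_cpow hc) (one_div_ne_zero hcC)
  rw [div_div_eq_mul_div, div_one] at hlim
  refine hlim.congr' ?_
  filter_upwards [self_mem_nhdsWithin] with ε (hε : 0 < ε)
  have hw := neg_add_I_mul_ne_zero hc ε
  have hbase : -1 / ((c : ℂ) * (-c + I * ε)) ≠ 0 := div_ne_zero (by simp) (mul_ne_zero hcC hw)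
  have hpow := cpow_ne_zero_iff.mpr (.inl hbase : _ ∨ (1 / 2 : ℂ) = 0)
  have hfactor : -I * (-I * ε / (c * (-c + I * ε))) = ε * (-1 / ((c : ℂ) * (-c + I * ε))) := by
    linear_combination ε / (c * (-c + I * ε)) * I_sq
  have hpoint : 2 * h / N + -I * ε / (c * (-c + I * ε)) = -1 / (-c + I * ε) := by
    rw [hcN]; field_simp; ring
  simp only [Pi.div_apply]
  rw [hpoint, hfactor, ofReal_mul_cpow_of_pos hε hbase]
  generalize (-1 / ((c : ℂ) * (-c + I * ε))) ^ (1 / 2 : ℂ) = w at hpow ⊢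
  field_simp

theorem tendsto_neg_I_mul_cpow {c : ℝ} (hc : 0 < c) :
    Tendsto (fun ε : ℝ ↦ (-I * (-c + I * ε)) ^ (1 / 2 : ℂ)) (𝓝[>] 0)
      (𝓝 ((1 + I) * √(c / 2))) := by
  have hsq : -I * -(c : ℂ) = ((1 + I) * √(c / 2)) ^ 2 := by
    rw [mul_pow, ← ofReal_pow, Real.sq_sqrt (by positivity)]
    push_cast
    linear_combination -(c / 2 : ℂ) * I_sq
  have hpos : 0 < ((1 + I) * √(c / 2)).re := by
    rw [re_mul_ofReal]; simpa using hc
  have hslit : -I * -(c : ℂ) ∈ slitPlane := by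
    rw [mem_slitPlane_iff]; right; simpa using hc.ne'
  have hcpow := (continuousAt_cpow_const (b := (1 / 2 : ℂ)) hslit).tendsto.comp
    ((tendsto_neg_add_I_mul c).const_mul (-I))
  rw [hsq, one_div, sq_cpow_two_inv hpos] at hcpow
  simpa only [one_div, Function.comp_def] using hcpow

-- The theta functional equation matches the asymptotics at `-p / (2q)` with those at `2q / p`.
theorem quadraticGaussSum_reciprocity (p q : ℕ) [NeZero p] [NeZero q] :
    quadraticGaussSum p q = (1 + I) / 4 * √((p : ℝ) / q) * quadraticGaussSum (4 * q) (-p) := by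
  have hp : (0 : ℝ) < p := mod_cast NeZero.pos p
  have hq : (0 : ℝ) < q := mod_cast NeZero.pos q
  have hpC : (p : ℂ) ≠ 0 := mod_cast hp.ne'
  have hqC : (q : ℂ) ≠ 0 := mod_cast hq.ne'
  set c : ℝ := p / (2 * q) with hc_def
  have hc : 0 < c := by positivity
  have hleft := tendsto_cpow_mul_jacobiTheta₂_vertical (4 * q) (-p)
  rw [show (2 * (-p : ℤ) / (4 * q : ℕ) : ℂ) = -c by
    rw [hc_def]; push_cast; field_simp; norm_num] at hleft
  have hright := tendsto_cpow_mul_jacobiTheta₂_neg_inv p q hc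
    (by rw [hc_def]; push_cast; field_simp)
  have htheta (ε : ℝ) : (-I * (-c + I * ε)) ^ (1 / 2 : ℂ) *
      ((ε : ℂ) ^ (1 / 2 : ℂ) * jacobiTheta₂ 0 (-c + I * ε)) =
      (ε : ℂ) ^ (1 / 2 : ℂ) * jacobiTheta₂ 0 (-1 / (-c + I * ε)) := by
    have hne : (-I * (-c + I * ε)) ^ (1 / 2 : ℂ) ≠ 0 := cpow_ne_zero_iff.mpr
      (.inl (mul_ne_zero (neg_ne_zero.mpr I_ne_zero) (neg_add_I_mul_ne_zero hc ε)))
    rw [jacobiTheta₂_functional_equation 0 (-c + I * ε), zero_pow two_ne_zero, mul_zero, zero_div,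
      Complex.exp_zero, mul_one]
    generalize (-I * (-c + I * ε)) ^ (1 / 2 : ℂ) = w at hne ⊢
    field_simp
  have hlim := tendsto_nhds_unique hright
    (((tendsto_neg_I_mul_cpow hc).mul hleft).congr htheta)
  have hsqrt : √(c / 2) = √((p : ℝ) / q) / 2 := by
    rw [show c / 2 = p / q / 2 ^ 2 by rw [hc_def]; field_simp,
      Real.sqrt_div' _ (by norm_num), Real.sqrt_sq (by norm_num)]
  rw [hsqrt, hc_def] at hlim
  push_cast at hlim
  generalize quadraticGaussSum (4 * q) (-p) = G at hlim ⊢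
  field_simp at hlim ⊢
  linear_combination hlim

theorem quadraticGaussSum_four_neg (N : ℕ) :
    quadraticGaussSum 4 (-N) = 2 * (1 + (-I) ^ N) := by
  have hchar : ZMod.stdAddChar (-1 : ZMod 4) = -I := by
    have h := ZMod.stdAddChar_coe (N := 4) (-1)
    push_cast at h
    rw [h, ← exp_neg_pi_div_two_mul_I]
    ring_nf
  have hpow : ZMod.stdAddChar (-(N : ZMod 4)) = (-I) ^ N := by
    rw [← hchar, ← AddChar.map_nsmul_eq_pow, nsmul_eq_mul, mul_neg_one]
  simp only [quadraticGaussSum, Int.cast_neg, Int.cast_natCast]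
  rw [sum_zmod_eq_sum_range]
  simp only [Finset.sum_range_succ, Finset.sum_range_zero]
  push_cast
  rw [show (2 : ZMod 4) ^ 2 = 0 by decide, show (3 : ZMod 4) ^ 2 = 1 by decide]
  simp only [ne_eq, OfNat.ofNat_ne_zero, not_false_eq_true, zero_pow, mul_zero,
    AddChar.map_zero_eq_one, zero_add, one_pow, mul_one, hpow]
  ring

theorem quadraticGaussSum_one (N : ℕ) [NeZero N] :
    quadraticGaussSum N 1 = (1 + I) * (1 + (-I) ^ N) / 2 * √N := by
  have h := quadraticGaussSum_reciprocity N 1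
  simp only [Nat.cast_one, div_one] at h
  rw [h]
  change _ * quadraticGaussSum 4 (-N) = _
  rw [quadraticGaussSum_four_neg]
  ring

end QuadraticGaussSum

section Cotangent

theorem rpow_neg_sub_rpow_neg_le {u v s : ℝ} (hu : 0 < u) (huv : u ≤ v) (hs : 1 ≤ s) :
    u ^ (-s) - v ^ (-s) ≤ s * (v - u) / v * u ^ (-s) := by
  have hv : 0 < v := hu.trans_le huv
  have hbernoulli : 1 - s * (v - u) / v ≤ (u / v) ^ s := by
    have h := one_add_mul_self_le_rpow_one_add (s := u / v - 1) (by linarith [div_pos hu hv]) hs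
    rw [add_sub_cancel] at h
    refine (Eq.le ?_).trans h
    field_simp
    ring
  have hratio : v ^ (-s) = (u / v) ^ s * u ^ (-s) := by
    rw [Real.div_rpow hu.le hv.le, Real.rpow_neg hu.le, Real.rpow_neg hv.le]
    field_simp [(Real.rpow_pos_of_pos hu s).ne']
  rw [hratio]
  linarith [mul_le_mul_of_nonneg_right hbernoulli (Real.rpow_nonneg hu.le (-s))]

theorem abs_rpow_neg_sub_rpow_neg_le {x : ℝ} (hx : x ∈ Set.Ioo 0 1) {s : ℝ}
    (hs : s ∈ Set.Icc 1 2) (n : ℕ) :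
    |((n : ℝ) + x) ^ (-s) - (n + 1 - x) ^ (-s)| ≤
      2 * (min x (1 - x)) ^ (-2 : ℝ) * (1 / ((n : ℝ) + 1) ^ 2) := by
  obtain ⟨hx0, hx1⟩ := hx
  obtain ⟨hs1, hs2⟩ := hs
  set δ := min x (1 - x)
  have hδ0 : 0 < δ := lt_min hx0 (by linarith)
  have hδx : δ ≤ x := min_le_left _ _
  have hδx' : δ ≤ 1 - x := min_le_right _ _
  have hn : (0 : ℝ) ≤ n := n.cast_nonneg
  have hanti {a b : ℝ} (ha : 0 < a) (hab : a ≤ b) : b ^ (-s) ≤ a ^ (-s) :=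
    Real.rpow_le_rpow_of_nonpos ha hab (by linarith)
  have hpow : (n + δ) ^ (-s) ≤ δ ^ (-2 : ℝ) * ((n : ℝ) + 1)⁻¹ := calc
    (n + δ) ^ (-s) ≤ (δ * (n + 1)) ^ (-s) := hanti (by positivity) (by nlinarith)
    _ = δ ^ (-s) * ((n : ℝ) + 1) ^ (-s) := Real.mul_rpow hδ0.le (by positivity)
    _ ≤ δ ^ (-2 : ℝ) * ((n : ℝ) + 1) ^ (-1 : ℝ) := by
      gcongr ?_ * ?_
      · exact Real.rpow_le_rpow_of_exponent_ge hδ0 (by linarith) (by linarith)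
      · exact Real.rpow_le_rpow_of_exponent_le (by linarith) (by linarith)
    _ = δ ^ (-2 : ℝ) * ((n : ℝ) + 1)⁻¹ := by rw [Real.rpow_neg_one]
  calc |((n : ℝ) + x) ^ (-s) - (n + 1 - x) ^ (-s)|
      ≤ (n + δ) ^ (-s) - ((n : ℝ) + 1) ^ (-s) := by
        rw [abs_sub_le_iff]
        constructor <;> apply sub_le_sub <;> apply hanti <;> linarith [hn]
    _ ≤ s * (n + 1 - (n + δ)) / (n + 1) * (n + δ) ^ (-s) :=
        rpow_neg_sub_rpow_neg_le (by positivity) (by linarith) hs1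
    _ ≤ 2 * 1 / (n + 1) * (δ ^ (-2 : ℝ) * ((n : ℝ) + 1)⁻¹) := by
        gcongr <;> linarith
    _ = 2 * δ ^ (-2 : ℝ) * (1 / ((n : ℝ) + 1) ^ 2) := by field_simp

theorem hasSum_nat_hurwitzZetaOdd_ofReal {x : ℝ} (hx : x ∈ Set.Ioo 0 1) {s : ℝ} (hs : 1 < s) :
    HasSum (fun n : ℕ ↦ (((n + x) ^ (-s) - (n + 1 - x) ^ (-s) : ℝ) : ℂ) / 2)
      (HurwitzZeta.hurwitzZetaOdd x s) := by
  convert! HurwitzZeta.hasSum_nat_hurwitzZetaOdd_of_mem_Icc ⟨hx.1.le, hx.2.le⟩ (s := s)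
    (by simpa using hs) using 3 with n
  have hn : (0 : ℝ) ≤ n := n.cast_nonneg
  rw [ofReal_sub, Real.rpow_neg (by linarith [hn, hx.1]), Real.rpow_neg (by linarith [hn, hx.2]),
    ofReal_inv, ofReal_inv, ofReal_cpow (by linarith [hn, hx.1]),
    ofReal_cpow (by linarith [hn, hx.2])]
  push_cast
  rw [one_div, one_div]

theorem ofReal_mem_integerComplement {x : ℝ} (hx : x ∈ Set.Ioo 0 1) :
    (x : ℂ) ∈ Complex.integerComplement := by
  rintro ⟨m, hm⟩
  obtain ⟨h0, h1⟩ := hx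
  have hmx : (m : ℝ) = x := mod_cast hm
  rw [← hmx] at h0 h1
  norm_cast at h0 h1
  lia

theorem tendsto_sum_range_cot {x : ℂ} (hx : x ∈ Complex.integerComplement) :
    Tendsto (fun N ↦ ∑ n ∈ Finset.range N, (1 / (n + x) - 1 / (n + 1 - x))) atTop
      (𝓝 (Real.pi * Complex.cot (Real.pi * x))) := by
  have hinv : Tendsto (fun N : ℕ ↦ 1 / (x + N)) atTop (𝓝 0) := by
    simp_rw [one_div]
    exact tendsto_inv₀_cobounded.comp
      ((tendsto_const_add_cobounded x).comp tendsto_natCast_atTop_cobounded)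
  have hlim := ((tendsto_logDeriv_euler_cot_sub hx).add_const (1 / x)).sub hinv
  rw [sub_add_cancel, sub_zero] at hlim
  refine hlim.congr fun N ↦ ?_
  induction N with
  | zero => simp
  | succ N ih =>
    rw [Finset.sum_range_succ, Finset.sum_range_succ, ← ih, cotTerm, ← neg_sub x, div_neg]
    push_cast
    ring

-- Pairing the terms `n + x` and `n + 1 - x` gives a bound `O(1 / n²)` uniform in `s ∈ [1, 2]`,
-- which is what allows `s → 1⁺` inside the series.
theorem hasSum_nat_hurwitzZetaOdd_one {x : ℝ} (hx : x ∈ Set.Ioo 0 1) :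
    HasSum (fun n : ℕ ↦ (1 / (n + x) - 1 / (n + 1 - x) : ℂ) / 2)
      (HurwitzZeta.hurwitzZetaOdd x 1) := by
  let f (s : ℝ) (n : ℕ) : ℂ := (((n + x) ^ (-s) - (n + 1 - x) ^ (-s) : ℝ) : ℂ) / 2
  let bound (n : ℕ) : ℝ := 2 * (min x (1 - x)) ^ (-2 : ℝ) * (1 / ((n : ℝ) + 1) ^ 2)
  have hsummable : Summable bound := .mul_left _ <|
    mod_cast (summable_nat_add_iff 1).mpr (Real.summable_one_div_nat_pow.mpr one_lt_two)
  have hbound {s : ℝ} (hs : s ∈ Set.Icc 1 2) (n : ℕ) : ‖f s n‖ ≤ bound n := by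
    refine le_trans ?_ (abs_rpow_neg_sub_rpow_neg_le hx hs n)
    rw [norm_div, norm_real, Real.norm_eq_abs, Complex.norm_two]
    exact half_le_self (abs_nonneg _)
  have hcont (n : ℕ) : Continuous fun s ↦ f s n := by
    have hrpow {b : ℝ} (hb : 0 < b) : Continuous fun s : ℝ ↦ b ^ (-s) :=
      (Real.continuous_const_rpow hb.ne').comp continuous_neg
    have hn : (0 : ℝ) ≤ n := n.cast_nonneg
    exact (continuous_ofReal.comp
      ((hrpow (by linarith [hn, hx.1])).sub (hrpow (by linarith [hn, hx.2])))).div_const 2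
  have hlim : Tendsto (fun s ↦ ∑' n, f s n) (𝓝[>] 1) (𝓝 (∑' n, f 1 n)) := by
    refine tendsto_tsum_of_dominated_convergence hsummable
      (fun n ↦ ((hcont n).tendsto 1).mono_left nhdsWithin_le_nhds) ?_
    filter_upwards [Ioc_mem_nhdsGT one_lt_two] with s hs n using hbound ⟨hs.1.le, hs.2⟩ n
  have hzeta : Tendsto (fun s : ℝ ↦ HurwitzZeta.hurwitzZetaOdd x s) (𝓝[>] 1)
      (𝓝 (HurwitzZeta.hurwitzZetaOdd x 1)) :=
    (((HurwitzZeta.differentiable_hurwitzZetaOdd x).continuous.comp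
      continuous_ofReal).tendsto' 1 _ (by simp)).mono_left nhdsWithin_le_nhds
  have hvalue : HurwitzZeta.hurwitzZetaOdd x 1 = ∑' n, f 1 n :=
    tendsto_nhds_unique hzeta <| hlim.congr' <| by
      filter_upwards [self_mem_nhdsWithin] with s hs
      exact (hasSum_nat_hurwitzZetaOdd_ofReal hx hs).tsum_eq
  have hf1 (n : ℕ) : f 1 n = (1 / (n + x) - 1 / (n + 1 - x) : ℂ) / 2 := by
    simp only [f, Real.rpow_neg_one, one_div]
    push_cast
    rfl
  rw [hvalue]
  exact (Summable.of_norm_bounded hsummable (hbound ⟨le_rfl, one_le_two⟩)).hasSum.congr_fun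
    fun n ↦ (hf1 n).symm

theorem hurwitzZetaOdd_one {x : ℝ} (hx : x ∈ Set.Ioo 0 1) :
    HurwitzZeta.hurwitzZetaOdd x 1 = Real.pi / 2 * Complex.cot (Real.pi * x) := by
  have hcot := (tendsto_sum_range_cot (ofReal_mem_integerComplement hx)).div_const 2
  simp_rw [Finset.sum_div] at hcot
  rw [tendsto_nhds_unique (hasSum_nat_hurwitzZetaOdd_one hx).tendsto_sum_nat hcot,
    mul_div_right_comm]

theorem zmodLFunction_one_of_odd {N : ℕ} [NeZero N] {Φ : ZMod N → ℂ} (hΦ : Φ.Odd) :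
    ZMod.LFunction Φ 1 =
      Real.pi / (2 * N) * ∑ j : ZMod N, Φ j * Complex.cot (Real.pi * (j.val / N)) := by
  have hterm (j : ZMod N) : Φ j * HurwitzZeta.hurwitzZetaOdd (ZMod.toAddCircle j) 1 =
      Φ j * (Real.pi / 2 * Complex.cot (Real.pi * (j.val / N))) := by
    rcases eq_or_ne j 0 with rfl | hj
    · simp [hΦ.map_zero]
    · have hN : (0 : ℝ) < N := mod_cast NeZero.pos N
      have hval : 0 < (j.val : ℝ) := mod_cast Nat.pos_of_ne_zero ((ZMod.val_ne_zero j).mpr hj)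
      have hlt : (j.val : ℝ) < N := mod_cast j.val_lt
      rw [ZMod.toAddCircle_apply, hurwitzZetaOdd_one ⟨by positivity, (div_lt_one hN).mpr hlt⟩]
      push_cast
      rfl
  rw [ZMod.LFunction_def_odd hΦ, Finset.sum_congr rfl fun j _ ↦ hterm j, cpow_neg_one,
    Finset.mul_sum, Finset.mul_sum]
  exact Finset.sum_congr rfl fun j _ ↦ by ring

end Cotangent

section FiniteField

theorem sum_addChar_sq_eq_gaussSum {F R : Type*} [Field F] [Fintype F] [DecidableEq F] [CommRing R]
    [IsDomain R] (hF : ringChar F ≠ 2) {ψ : AddChar F R} (hψ : ψ ≠ 1) :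
    ∑ x, ψ (x ^ 2) = gaussSum ((quadraticChar F).ringHomComp (Int.castRingHom R)) ψ := by
  have hfiber (b : F) : ∑ x with x ^ 2 = b, ψ b = (quadraticChar F b : R) * ψ b + ψ b := by
    have hcard : (Finset.card {x : F | x ^ 2 = b} : ℤ) = quadraticChar F b + 1 := by
      rw [← quadraticChar_card_sqrts hF b, Set.toFinset_ofPred]
    rw [Finset.sum_const, nsmul_eq_mul, ← Int.cast_natCast, hcard, Int.cast_add, Int.cast_one,
      add_mul, one_mul]
  rw [← Finset.sum_fiberwise' Finset.univ (fun x : F ↦ x ^ 2) ψ,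
    Finset.sum_congr rfl fun b _ ↦ hfiber b, Finset.sum_add_distrib,
    AddChar.sum_eq_zero_of_ne_one hψ, add_zero]
  rfl

end FiniteField

section Positivity

open scoped ComplexOrder

theorem dirichletLFunction_nonneg_of_isQuadratic {N : ℕ} [NeZero N] {χ : DirichletCharacter ℂ N}
    (hχ : χ.IsQuadratic) {s : ℝ} (hs : 1 < s) : 0 ≤ χ.LFunction s := by
  have hs' : 1 < (s : ℂ).re := by simpa using hs
  rw [DirichletCharacter.LFunction_eq_LSeries χ hs']
  refine ge_of_tendsto' (χ.LSeries_eulerProduct hs') fun n ↦ Finset.prod_nonneg fun p hp ↦ ?_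
  have hp1 : (1 : ℝ) ≤ p := mod_cast (Nat.prime_of_mem_primesBelow hp).one_le
  have hps : (p : ℂ) ^ (-s : ℂ) = ((p ^ (-s) : ℝ) : ℂ) := by
    rw [ofReal_cpow (by linarith)]; push_cast; rfl
  have hle : (p : ℝ) ^ (-s) ≤ 1 := Real.rpow_le_one_of_one_le_of_nonpos hp1 (by linarith)
  have hnonneg : (0 : ℝ) ≤ (p : ℝ) ^ (-s) := by positivity
  rw [inv_nonneg, hps, sub_nonneg]
  rcases hχ p with h | h | h <;> rw [h]
  · simp
  · norm_cast
    linarith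
  · rw [neg_one_mul]
    norm_cast
    linarith

theorem dirichletLFunction_one_pos_of_isQuadratic {N : ℕ} [NeZero N] {χ : DirichletCharacter ℂ N}
    (hχ : χ.IsQuadratic) (hne : χ ≠ 1) : 0 < χ.LFunction 1 := by
  have hlim : Tendsto (fun s : ℝ ↦ χ.LFunction s) (𝓝[>] 1) (𝓝 (χ.LFunction 1)) :=
    (((DirichletCharacter.differentiable_LFunction hne).continuous.comp
      continuous_ofReal).tendsto' 1 _ (by simp)).mono_left nhdsWithin_le_nhds
  refine lt_of_le_of_ne (ge_of_tendsto hlim ?_)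
    (DirichletCharacter.LFunction_apply_one_ne_zero hne).symm
  filter_upwards [self_mem_nhdsWithin] with s hs
  exact dirichletLFunction_nonneg_of_isQuadratic hχ hs

end Positivity

section Fourier

theorem sum_range_mul_pow {K : Type*} [Field K] {z : K} {n : ℕ} (hz : z ^ n = 1) (h1 : z ≠ 1) :
    ∑ k ∈ Finset.range n, (k : K) * z ^ k = n / (z - 1) := by
  have hind (m : ℕ) : (z - 1) * ∑ k ∈ Finset.range m, (k : K) * z ^ k =
      m * z ^ m - z * ∑ k ∈ Finset.range m, z ^ k := by
    induction m with
    | zero => simp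
    | succ m ih =>
      rw [Finset.sum_range_succ, Finset.sum_range_succ, mul_add, ih]
      push_cast
      ring
  have h1' := sub_ne_zero.mpr h1
  have hgeom : ∑ k ∈ Finset.range n, z ^ k = 0 := by
    rw [geom_sum_eq h1, hz, sub_self, zero_div]
  rw [eq_div_iff h1', mul_comm, hind, hgeom, hz, mul_one, mul_zero, sub_zero]

theorem inv_stdAddChar_sub_one {N : ℕ} [NeZero N] {j : ZMod N} (hj : j ≠ 0) :
    (ZMod.stdAddChar j - 1)⁻¹ = -1 / 2 - I / 2 * Complex.cot (Real.pi * (j.val / N)) := by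
  have hexp : cexp (2 * Real.pi * I * (j.val / N)) = ZMod.stdAddChar j := by
    have h := ZMod.stdAddChar_coe (N := N) j.val
    rw [Int.cast_natCast, ZMod.natCast_zmod_val] at h
    rw [h, Int.cast_natCast, mul_div_assoc]
  have hne : ZMod.stdAddChar j ≠ (1 : ℂ) := fun h ↦
    hj (ZMod.injective_stdAddChar (h.trans (AddChar.map_zero_eq_one _).symm))
  have h1 := sub_ne_zero.mpr hne
  have h2 := sub_ne_zero.mpr hne.symm
  rw [Complex.cot_pi_eq_exp_ratio, hexp]
  field_simp
  ring

theorem sum_natCast_val_mul_stdAddChar {N : ℕ} [NeZero N] {j : ZMod N} (hj : j ≠ 0) :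
    ∑ k : ZMod N, (k.val : ℂ) * ZMod.stdAddChar (k * j) =
      -N / 2 - I * N / 2 * Complex.cot (Real.pi * (j.val / N)) := by
  have hne : ZMod.stdAddChar j ≠ (1 : ℂ) := fun h ↦
    hj (ZMod.injective_stdAddChar (h.trans (AddChar.map_zero_eq_one _).symm))
  have hpow (k : ℕ) : (ZMod.stdAddChar ((k : ZMod N) * j) : ℂ) = ZMod.stdAddChar j ^ k := by
    rw [← AddChar.map_nsmul_eq_pow, nsmul_eq_mul]
  have hroot : (ZMod.stdAddChar j : ℂ) ^ N = 1 := by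
    rw [← hpow, ZMod.natCast_self, zero_mul, AddChar.map_zero_eq_one]
  have hterm : ∀ k ∈ Finset.range N, (((k : ZMod N).val : ℕ) : ℂ) *
      ZMod.stdAddChar ((k : ZMod N) * j) = k * ZMod.stdAddChar j ^ k := fun k hk ↦ by
    rw [ZMod.val_cast_of_lt (Finset.mem_range.mp hk), hpow]
  rw [sum_zmod_eq_sum_range, Finset.sum_congr rfl hterm, sum_range_mul_pow hroot hne,
    div_eq_mul_inv, inv_stdAddChar_sub_one hj]
  ring

theorem gaussSum_mul_sum_inv_mul_val {N : ℕ} [NeZero N] {χ : DirichletCharacter ℂ N}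
    (hχ : χ.IsPrimitive) (hodd : χ.Odd) :
    gaussSum χ ZMod.stdAddChar * ∑ k : ZMod N, χ⁻¹ k * k.val =
      -(I * N ^ 2 / Real.pi) * χ.LFunction 1 := by
  have hN : (N : ℂ) ≠ 0 := mod_cast NeZero.ne N
  have hsum : ∑ j, χ j = 0 := hodd.to_fun.sum_eq_zero
  have hterm (j : ZMod N) : χ j * ∑ k : ZMod N, (k.val : ℂ) * ZMod.stdAddChar (k * j) =
      χ j * (-N / 2) - I * N / 2 * (χ j * Complex.cot (Real.pi * (j.val / N))) := by
    rcases eq_or_ne j 0 with rfl | hj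
    · rw [hodd.to_fun.map_zero]; ring
    · rw [sum_natCast_val_mul_stdAddChar hj]; ring
  calc gaussSum χ ZMod.stdAddChar * ∑ k : ZMod N, χ⁻¹ k * k.val
      = ∑ k : ZMod N, ∑ j : ZMod N, χ j * ((k.val : ℂ) * ZMod.stdAddChar (k * j)) := by
        rw [Finset.mul_sum]
        refine Finset.sum_congr rfl fun k _ ↦ ?_
        rw [← mul_assoc, mul_comm (gaussSum _ _), ← gaussSum_mulShift_of_isPrimitive _ hχ,
          gaussSum, Finset.sum_mul]
        refine Finset.sum_congr rfl fun j _ ↦ ?_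
        rw [AddChar.mulShift_apply]
        ring
    _ = ∑ j : ZMod N, χ j * ∑ k : ZMod N, (k.val : ℂ) * ZMod.stdAddChar (k * j) := by
        rw [Finset.sum_comm]
        simp_rw [Finset.mul_sum]
    _ = -(I * N / 2) * ∑ j : ZMod N, χ j * Complex.cot (Real.pi * (j.val / N)) := by
        rw [Finset.sum_congr rfl fun j _ ↦ hterm j, Finset.sum_sub_distrib, ← Finset.sum_mul,
          hsum, zero_mul, zero_sub, ← Finset.mul_sum, neg_mul]
    _ = -(I * N ^ 2 / Real.pi) * χ.LFunction 1 := by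
        rw [DirichletCharacter.LFunction, zmodLFunction_one_of_odd hodd.to_fun]
        field_simp

end Fourier

theorem isPrimitive_of_prime_of_ne_one {p : ℕ} [Fact p.Prime] {R : Type*} [CommMonoidWithZero R]
    {χ : DirichletCharacter R p} (hχ : χ ≠ 1) : χ.IsPrimitive :=
  ((Fact.out : p.Prime).eq_one_or_self_of_dvd _ χ.conductor_dvd_level).resolve_left
    fun h ↦ hχ (DirichletCharacter.eq_one_iff_conductor_eq_one.mpr h)

/-- The Legendre symbol modulo `p` as a complex Dirichlet character, so that it has an
`LFunction`. -/
noncomputable def legendreChar (p : ℕ) [Fact p.Prime] : DirichletCharacter ℂ p :=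
  (quadraticChar (ZMod p)).ringHomComp (Int.castRingHom ℂ)

theorem legendreChar_intCast (p : ℕ) [Fact p.Prime] (k : ℤ) :
    legendreChar p k = legendreSym p k := rfl

theorem isQuadratic_legendreChar (p : ℕ) [Fact p.Prime] : (legendreChar p).IsQuadratic :=
  (quadraticChar_isQuadratic _).comp _

theorem sum_legendreChar_mul_val_eq_intCast (p : ℕ) [Fact p.Prime] :
    ∑ k : ZMod p, legendreChar p k * k.val =
      ((∑ k ∈ Finset.Icc 1 (p - 1), legendreSym p k * k : ℤ) : ℂ) := by
  have hterm : ∀ k ∈ Finset.range p, legendreChar p k * (k : ZMod p).val =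
      ((legendreSym p k * k : ℤ) : ℂ) := fun k hk ↦ by
    rw [ZMod.val_cast_of_lt (Finset.mem_range.mp hk), Int.cast_mul, ← legendreChar_intCast,
      Int.cast_natCast, Int.cast_natCast]
  have hp0 : 0 < p := NeZero.pos p
  have hinsert : Finset.range p = insert 0 (Finset.Icc 1 (p - 1)) := by
    ext k
    rw [Finset.mem_range, Finset.mem_insert, Finset.mem_Icc]
    lia
  rw [sum_zmod_eq_sum_range, Finset.sum_congr rfl hterm, ← Int.cast_sum, hinsert,
    Finset.sum_insert (by simp), Nat.cast_zero, mul_zero, zero_add]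

section LegendreCharacter

open scoped ComplexOrder

variable {p : ℕ} [Fact p.Prime]

theorem legendreChar_ne_one (hp : p ≠ 2) : legendreChar p ≠ 1 :=
  (MulChar.ringHomComp_ne_one_iff (Int.castRingHom ℂ).injective_int).mpr
    (quadraticChar_ne_one ((ZMod.ringChar_zmod_n p).substr hp))

theorem odd_legendreChar (h3 : p % 4 = 3) : (legendreChar p).Odd := by
  have hp : p ≠ 2 := by rintro rfl; contradiction
  have h := legendreChar_intCast p (-1)
  rw [legendreSym.at_neg_one hp, ZMod.χ₄_nat_three_mod_four h3] at h
  rw [DirichletCharacter.Odd]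
  exact_mod_cast h

theorem gaussSum_legendreChar (hp : p ≠ 2) :
    gaussSum (legendreChar p) ZMod.stdAddChar = (1 + I) * (1 + (-I) ^ p) / 2 * √p := by
  have hψ : (ZMod.stdAddChar : AddChar (ZMod p) ℂ) ≠ 1 := fun h ↦ zero_ne_one <|
    ZMod.injective_stdAddChar (N := p) (by rw [h, AddChar.one_apply, AddChar.one_apply])
  rw [legendreChar, ← sum_addChar_sq_eq_gaussSum ((ZMod.ringChar_zmod_n p).substr hp) hψ,
    ← quadraticGaussSum_one]
  simp only [quadraticGaussSum, Int.cast_one, one_mul]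

theorem gaussSum_legendreChar_of_mod_four_eq_three (h3 : p % 4 = 3) :
    gaussSum (legendreChar p) ZMod.stdAddChar = I * √p := by
  have hp : p ≠ 2 := by rintro rfl; contradiction
  have hpow : (-I) ^ p = I := by
    rw [← Nat.div_add_mod p 4, h3, pow_add, pow_mul, neg_pow I 4, I_pow_four]
    linear_combination -I * I_sq
  rw [gaussSum_legendreChar hp, hpow]
  linear_combination (√p / 2 : ℂ) * I_sq

theorem sum_legendreChar_mul_val (h3 : p % 4 = 3) :
    ∑ k : ZMod p, legendreChar p k * k.val =
      -((p * √p / Real.pi : ℝ) : ℂ) * (legendreChar p).LFunction 1 := by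
  have hp : p ≠ 2 := by rintro rfl; contradiction
  have hsqrt : (√p : ℂ) ≠ 0 := by
    rw [ofReal_ne_zero, Real.sqrt_ne_zero (Nat.cast_nonneg p), Nat.cast_ne_zero]
    exact NeZero.ne p
  have hsq : (√p : ℂ) * √p = p := mod_cast Real.mul_self_sqrt (Nat.cast_nonneg p)
  have h := gaussSum_mul_sum_inv_mul_val (isPrimitive_of_prime_of_ne_one (legendreChar_ne_one hp))
    (odd_legendreChar h3)
  rw [gaussSum_legendreChar_of_mod_four_eq_three h3, (isQuadratic_legendreChar p).inv] at h
  refine mul_left_cancel₀ (mul_ne_zero I_ne_zero hsqrt) (h.trans ?_)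
  push_cast
  linear_combination (I * p / Real.pi * (legendreChar p).LFunction 1) * hsq

theorem sum_legendreSym_mul_neg (h3 : p % 4 = 3) :
    ∑ k ∈ Finset.Icc 1 (p - 1), legendreSym p k * k < 0 := by
  have hp : p ≠ 2 := by rintro rfl; contradiction
  have hp0 : (0 : ℝ) < p := mod_cast NeZero.pos p
  have hfactor : (0 : ℂ) < (p * √p / Real.pi : ℝ) := by
    rw [zero_lt_real]
    positivity
  have hneg : ∑ k : ZMod p, legendreChar p k * k.val < 0 := by
    rw [sum_legendreChar_mul_val h3, neg_mul, neg_lt_zero]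
    exact mul_pos hfactor
      (dirichletLFunction_one_pos_of_isQuadratic (isQuadratic_legendreChar p)
        (legendreChar_ne_one hp))
  rw [sum_legendreChar_mul_val_eq_intCast] at hneg
  exact_mod_cast hneg

end LegendreCharacter

section Residues

theorem isSquare_natCast_zmod_iff {n : ℕ} [NeZero n] {a : ℕ} :
    IsSquare (a : ZMod n) ↔ ∃ x ∈ Finset.range n, x * x % n = a % n := by
  constructor
  · rintro ⟨y, hy⟩
    refine ⟨y.val, Finset.mem_range.mpr y.val_lt, ?_⟩
    rw [← ZMod.natCast_eq_natCast_iff', Nat.cast_mul, ZMod.natCast_zmod_val, hy]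
  · rintro ⟨x, -, hx⟩
    refine ⟨x, ?_⟩
    rw [← Nat.cast_mul]
    exact ((ZMod.natCast_eq_natCast_iff' _ _ n).mpr hx).symm

theorem sum_legendreSym_mul_eq_sub (p : ℕ) [Fact p.Prime] :
    ∑ k ∈ Finset.Icc 1 (p - 1), legendreSym p k * k =
      ((∑ k ∈ Finset.Icc 1 (p - 1) with ∃ x ∈ Finset.range p, x * x % p = k % p, k : ℕ) : ℤ) -
        (∑ k ∈ Finset.Icc 1 (p - 1) with ¬∃ x ∈ Finset.range p, x * x % p = k % p, k : ℕ) := by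
  rw [← Finset.sum_filter_add_sum_filter_not _ (fun k ↦ ∃ x ∈ Finset.range p, x * x % p = k % p),
    sub_eq_add_neg, Nat.cast_sum, Nat.cast_sum, ← Finset.sum_neg_distrib]
  congr 1 <;> refine Finset.sum_congr rfl fun k hk ↦ ?_ <;>
    obtain ⟨hmem, hres⟩ := Finset.mem_filter.mp hk <;> rw [← isSquare_natCast_zmod_iff] at hres
  · have hk0 : (k : ZMod p) ≠ 0 := by
      rw [Finset.mem_Icc] at hmem
      rw [Ne, ZMod.natCast_eq_zero_iff]
      exact Nat.not_dvd_of_pos_of_lt (by lia) (by lia)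
    rw [(legendreSym.eq_one_iff' p hk0).mpr hres, one_mul]
  · rw [(legendreSym.eq_neg_one_iff' p).mpr hres, neg_one_mul]

end Residues

end

theorem M_neg (p : ℕ) [Fact p.Prime] (h3 : p % 4 = 3) :
    (∑ k ∈ Finset.Icc 1 (p - 1), legendreSym p (k : ℤ) * (k : ℤ)) < 0 ∧
    (∑ k ∈ (Finset.Icc 1 (p - 1)).filter
        (fun k => ¬ ∃ x ∈ Finset.range p, x * x % p = k % p), k) >
      (∑ k ∈ (Finset.Icc 1 (p - 1)).filter
        (fun k => ∃ x ∈ Finset.range p, x * x % p = k % p), k) := by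
  have hneg := sum_legendreSym_mul_neg h3
  refine ⟨hneg, ?_⟩
  rw [sum_legendreSym_mul_eq_sub, sub_neg, Nat.cast_lt] at hneg
  exact hneg
end

section
/- Let p be a prime with p ≡ 3 (mod 4). Then |T(p)| < (2p√p/π)·(1 + (1/2)·log(p−2)). -/
/-- `T p = √p ∑_{n=1}^{(p-1)/2} tan(π n² / p)`. -/
noncomputable def T (p : ℕ) : ℝ :=
  Real.sqrt p * ∑ n ∈ Finset.Icc 1 ((p - 1) / 2), Real.tan (Real.pi * (n : ℝ) ^ 2 / p)

/-!
The function `f : a ↦ tan (π a / p)` on `ZMod p` is odd, so with `χ` the quadratic character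
`∑ₓ f (x²) = ∑ₐ (1 + χ a) f a = ∑ₐ χ a f a`, which is at most `∑ₐ |f a|` in absolute value.
The summands `f (x²)` and `|f a|` are even, so both sums are twice the sums over the half system
`1, …, (p - 1) / 2`. There `tan (π / 2 - y) < 1 / y` bounds the tangents by multiples of the
reciprocals of the odd numbers, whose sum is compared with a logarithm.
-/

open Finset Real

theorem sum_zmod_eq_add_two_nsmul_of_even {M : Type*} [AddCommMonoid M] {N : ℕ}
    {g : ZMod (2 * N + 1) → M} (hg : g.Even) :
    ∑ x, g x = g 0 + 2 • ∑ n ∈ Icc 1 N, g n := by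
  have sum_range : ∑ x, g x = ∑ n ∈ range (2 * N + 1), g n := by
    rw [← Fin.sum_univ_eq_sum_range (fun n ↦ g (n : ZMod (2 * N + 1)))]
    exact sum_congr rfl fun x _ ↦ congrArg g (ZMod.natCast_zmod_val x).symm
  have sum_upper : ∑ n ∈ Ico (N + 1) (2 * N + 1), g n = ∑ n ∈ Icc 1 N, g n := by
    refine sum_nbij' (2 * N + 1 - ·) (2 * N + 1 - ·) ?_ ?_ ?_ ?_ fun n hn ↦ ?_
    case refine_5 => rw [Nat.cast_sub (mem_Ico.1 hn).2.le, ZMod.natCast_self, zero_sub, hg.eq]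
    all_goals simp only [mem_Ico, mem_Icc]; omega
  rw [sum_range, range_eq_Ico, sum_eq_sum_Ico_succ_bot (by omega), Nat.cast_zero,
    zero_add, ← sum_Ico_consecutive _ (show 1 ≤ N + 1 by omega) (by omega), sum_upper,
    Ico_add_one_right_eq_Icc, two_nsmul]

section FiniteField

variable {F : Type*} [Field F] [Fintype F]

theorem sum_sq_eq_sum_quadraticChar_add_one_zsmul [DecidableEq F] {M : Type*}
    [AddCommGroup M] (hF : ringChar F ≠ 2) (f : F → M) :
    ∑ x, f (x ^ 2) = ∑ a, (quadraticChar F a + 1) • f a := by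
  rw [← Fintype.sum_fiberwise' (fun x : F ↦ x ^ 2)]
  refine sum_congr rfl fun a _ ↦ ?_
  rw [← quadraticChar_card_sqrts hF a, natCast_zsmul]
  simp [Fintype.card_subtype]

theorem sum_sq_eq_sum_quadraticChar_zsmul_of_odd [DecidableEq F] {M : Type*}
    [AddCommGroup M] [IsAddTorsionFree M] (hF : ringChar F ≠ 2) {f : F → M} (hf : f.Odd) :
    ∑ x, f (x ^ 2) = ∑ a, quadraticChar F a • f a := by
  simp_rw [sum_sq_eq_sum_quadraticChar_add_one_zsmul hF, add_zsmul, one_zsmul, sum_add_distrib,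
    hf.sum_eq_zero, add_zero]

theorem norm_quadraticChar_le_one [DecidableEq F] (a : F) : ‖quadraticChar F a‖ ≤ 1 := by
  rcases eq_or_ne a 0 with rfl | ha
  · simp
  · rcases quadraticChar_dichotomy ha with h | h <;> simp [h]

theorem norm_sum_sq_le_sum_norm_of_odd {E : Type*} [SeminormedAddCommGroup E]
    [IsAddTorsionFree E] (hF : ringChar F ≠ 2) {f : F → E} (hf : f.Odd) :
    ‖∑ x, f (x ^ 2)‖ ≤ ∑ a, ‖f a‖ := by
  classical
  rw [sum_sq_eq_sum_quadraticChar_zsmul_of_odd hF hf]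
  refine norm_sum_le_of_le _ fun a _ ↦ (norm_zsmul_le _ _).trans ?_
  exact mul_le_of_le_one_left (norm_nonneg _) (norm_quadraticChar_le_one a)

end FiniteField

theorem abs_sum_Icc_sq_le_sum_Icc_abs_of_odd {N : ℕ} [Fact (2 * N + 1).Prime]
    {f : ZMod (2 * N + 1) → ℝ} (hf : f.Odd) :
    |∑ n ∈ Icc 1 N, f ((n : ZMod (2 * N + 1)) ^ 2)| ≤
      ∑ n ∈ Icc 1 N, |f (n : ZMod (2 * N + 1))| := by
  have two_ne : ringChar (ZMod (2 * N + 1)) ≠ 2 := by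
    rw [ZMod.ringChar_zmod_n]; omega
  have sq_even : Function.Even fun x : ZMod (2 * N + 1) ↦ f (x ^ 2) := fun x ↦ by simp
  have abs_even : Function.Even fun x ↦ |f x| := fun x ↦ by simp only [hf.eq, abs_neg]
  have full := norm_sum_sq_le_sum_norm_of_odd two_ne hf
  simp only [norm_eq_abs] at full
  rw [sum_zmod_eq_add_two_nsmul_of_even sq_even, sum_zmod_eq_add_two_nsmul_of_even abs_even] at full
  simpa [hf.map_zero, abs_mul] using full

/-- The function `a ↦ tan (π a / m)` on residues modulo `m`, through the representative in
`[0, m)`; see `tanZMod_intCast` for its independence of the representative. -/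
noncomputable def tanZMod (m : ℕ) (a : ZMod m) : ℝ :=
  tan (π * a.val / m)

section TanZMod

variable {m : ℕ} [NeZero m]

theorem tanZMod_intCast (k : ℤ) : tanZMod m k = tan (π * k / m) := by
  have hm : (m : ℝ) ≠ 0 := NeZero.ne _
  have val_eq : (((k : ZMod m).val : ℤ) : ℝ) = ((k % m : ℤ) : ℝ) := by rw [ZMod.val_intCast]
  have k_eq : (k : ℝ) = (k % m : ℤ) + m * (k / m : ℤ) := mod_cast (Int.emod_add_mul_ediv k m).symm
  rw [tanZMod, ← Int.cast_natCast (ZMod.val _), val_eq, ← tan_add_int_mul_pi _ (k / m), k_eq]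
  congr 1
  field_simp

theorem tanZMod_natCast (n : ℕ) : tanZMod m n = tan (π * n / m) := by
  simpa using tanZMod_intCast (m := m) n

theorem odd_tanZMod : (tanZMod m).Odd := fun a ↦ by
  obtain ⟨k, rfl⟩ := ZMod.intCast_surjective a
  rw [← Int.cast_neg, tanZMod_intCast, tanZMod_intCast, Int.cast_neg, mul_neg, neg_div, tan_neg]

end TanZMod

theorem abs_sum_tan_sq_le_sum_tan {N : ℕ} [Fact (2 * N + 1).Prime] :
    |∑ n ∈ Icc 1 N, tan (π * (n : ℝ) ^ 2 / (2 * N + 1 : ℕ))| ≤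
      ∑ n ∈ Icc 1 N, tan (π * n / (2 * N + 1 : ℕ)) := by
  have tan_nonneg {n : ℕ} (hn : n ∈ Icc 1 N) : 0 ≤ tan (π * n / (2 * N + 1 : ℕ)) := by
    refine tan_nonneg_of_nonneg_of_le_pi_div_two (by positivity) ?_
    have : (n : ℝ) ≤ N := mod_cast (mem_Icc.1 hn).2
    rw [div_le_div_iff₀ (by positivity) two_pos, mul_assoc]
    gcongr
    push_cast
    linarith
  have bound := abs_sum_Icc_sq_le_sum_Icc_abs_of_odd (odd_tanZMod (m := 2 * N + 1))
  simp_rw [← Nat.cast_pow, tanZMod_natCast] at bound ⊢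
  exact bound.trans_eq (sum_congr rfl fun n hn ↦ abs_of_nonneg (tan_nonneg hn))

theorem tan_pi_div_two_sub_lt_inv {y : ℝ} (hy : 0 < y) (hy' : y < π / 2) :
    tan (π / 2 - y) < y⁻¹ := by
  rw [tan_pi_div_two_sub]
  exact inv_strictAnti₀ hy (lt_tan hy hy')

theorem sum_tan_lt_mul_sum_one_div_odd {N : ℕ} (hN : N ≠ 0) :
    ∑ n ∈ Icc 1 N, tan (π * n / (2 * N + 1)) <
      2 * (2 * N + 1) / π * ∑ j ∈ range N, 1 / (2 * j + 1 : ℝ) := by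
  have reflect : ∑ n ∈ Icc 1 N, tan (π * n / (2 * N + 1)) =
      ∑ j ∈ range N, tan (π / 2 - π * (2 * j + 1) / (2 * (2 * N + 1))) := by
    refine sum_nbij' (N - ·) (N - ·) ?_ ?_ ?_ ?_ fun n hn ↦ ?_
    case refine_5 =>
      rw [Nat.cast_sub (mem_Icc.1 hn).2]
      congr 1
      field_simp
      ring
    all_goals simp only [mem_Icc, mem_range]; omega
  rw [reflect, mul_sum]
  refine sum_lt_sum_of_nonempty (nonempty_range_iff.2 hN) fun j hj ↦ ?_
  have hj : (j : ℝ) < N := mod_cast mem_range.1 hj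
  calc tan (π / 2 - π * (2 * j + 1) / (2 * (2 * N + 1)))
      < (π * (2 * j + 1) / (2 * (2 * N + 1)))⁻¹ := by
        refine tan_pi_div_two_sub_lt_inv (by positivity) ?_
        rw [div_lt_div_iff₀ (by positivity) two_pos, mul_assoc]
        exact mul_lt_mul_of_pos_left (by linarith) pi_pos
    _ = 2 * (2 * N + 1) / π * (1 / (2 * j + 1)) := by field_simp

theorem sum_one_div_odd_le_one_add_half_log (N : ℕ) :
    ∑ j ∈ range (N + 1), 1 / (2 * j + 1 : ℝ) ≤ 1 + 1 / 2 * log (2 * N + 1) := by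
  induction N with
  | zero => simp
  | succ N ih =>
    have log_step : 2 / (2 * N + 3 : ℝ) ≤ log (2 * N + 3) - log (2 * N + 1) := by
      rw [← log_div (by positivity) (by positivity)]
      convert one_sub_inv_le_log_of_pos (x := (2 * N + 3 : ℝ) / (2 * N + 1)) (by positivity) using 1
      field_simp
      ring
    have next_odd : 2 * ((N + 1 : ℕ) : ℝ) + 1 = 2 * N + 3 := by push_cast; ring
    rw [sum_range_succ, next_odd]
    linarith [show 1 / (2 * N + 3 : ℝ) = 1 / 2 * (2 / (2 * N + 3)) by ring]

theorem sum_tan_lt_mul_one_add_half_log {N : ℕ} (hN : N ≠ 0) :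
    ∑ n ∈ Icc 1 N, tan (π * n / (2 * N + 1)) <
      2 * (2 * N + 1) / π * (1 + 1 / 2 * log (2 * N - 1)) := by
  refine (sum_tan_lt_mul_sum_one_div_odd hN).trans_le ?_
  gcongr
  obtain ⟨M, rfl⟩ := Nat.exists_eq_succ_of_ne_zero hN
  rw [show 2 * ((M + 1 : ℕ) : ℝ) - 1 = 2 * M + 1 by push_cast; ring]
  exact sum_one_div_odd_le_one_add_half_log M

theorem T_upper_bound_general (p : ℕ) (hp : p.Prime) (hp2 : p ≠ 2) :
    |T p| < (2 * (p : ℝ) * √p / π) * (1 + (1 / 2) * log ((p : ℝ) - 2)) := by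
  obtain ⟨N, rfl⟩ := hp.odd_of_ne_two hp2
  have : Fact (2 * N + 1).Prime := ⟨hp⟩
  have hN : N ≠ 0 := by rintro rfl; exact hp.ne_one rfl
  have half_eq : (2 * N + 1 - 1) / 2 = N := by omega
  have sqrt_pos : 0 < √(2 * N + 1 : ℕ) := by positivity
  calc |T (2 * N + 1)|
      = √(2 * N + 1 : ℕ) * |∑ n ∈ Icc 1 N, tan (π * (n : ℝ) ^ 2 / (2 * N + 1 : ℕ))| := by
        rw [T, half_eq, abs_mul, abs_of_pos sqrt_pos]
    _ ≤ √(2 * N + 1 : ℕ) * ∑ n ∈ Icc 1 N, tan (π * n / (2 * N + 1 : ℕ)) := by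
        gcongr
        exact abs_sum_tan_sq_le_sum_tan
    _ < √(2 * N + 1 : ℕ) * (2 * (2 * N + 1) / π * (1 + 1 / 2 * log (2 * N - 1))) := by
        gcongr
        exact_mod_cast sum_tan_lt_mul_one_add_half_log hN
    _ = _ := by
        rw [show (2 * N - 1 : ℝ) = (2 * N + 1 : ℕ) - 2 by push_cast; ring]
        push_cast
        ring

theorem T_upper_bound (p : ℕ) (hp : p.Prime) (h3 : p % 4 = 3) :
    |T p| < (2 * (p : ℝ) * Real.sqrt p / Real.pi) *
      (1 + (1 / 2) * Real.log ((p : ℝ) - 2)) :=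
  T_upper_bound_general p hp (by omega)
end

section
/- Let p be a prime with p ≡ 3 (mod 4). Then C(p) = −T(p) if p ≡ 7 (mod 8), and C(p) = T(p)/3 if p ≡ 3 (mod 8). -/
/-- `C p = √p ∑_{n=1}^{(p-1)/2} cot(π n² / p)`. -/
noncomputable def C (p : ℕ) : ℝ :=
  Real.sqrt p * ∑ n ∈ Finset.Icc 1 ((p - 1) / 2), Real.cot (Real.pi * (n : ℝ) ^ 2 / p)

/-!
Put `S a = ∑ cot (π a x² / p)`, the sum being over all residues `x` modulo `p`. The identity
`tan t = cot t - 2 cot 2t` expresses both `C p` and `T p` through `S 1` and `S 2`. If `2` is a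
square modulo `p`, then `x ↦ s x` with `s² = 2` gives `S 2 = S 1`; if `-2` is a square, then
`S 2 = -S (-2) = -S 1` because the cotangent is odd. By the supplementary laws of quadratic
reciprocity, the first happens for `p ≡ 7 (mod 8)` and the second for `p ≡ 3 (mod 8)`.
-/

open Finset

section Sums

variable {M : Type*} [AddCommMonoid M]

theorem sum_zmod_eq_sum_range_s10 (p : ℕ) [NeZero p] (F : ZMod p → M) :
    ∑ x, F x = ∑ n ∈ range p, F n := by
  obtain ⟨k, rfl⟩ := Nat.exists_eq_succ_of_ne_zero (NeZero.ne p)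
  rw [Finset.sum_range]
  exact Fintype.sum_congr _ _ fun x => congrArg F (ZMod.natCast_zmod_val x).symm

theorem sum_zmod_eq_add_two_nsmul_sum_Icc_of_even {p : ℕ} [NeZero p] (hp : Odd p)
    {F : ZMod p → M} (hF : F.Even) :
    ∑ x, F x = F 0 + 2 • ∑ n ∈ Icc 1 ((p - 1) / 2), F n := by
  obtain ⟨m, hm⟩ := hp
  have upper_half : ∑ n ∈ range m, F (m + n + 1 : ℕ) = ∑ n ∈ range m, F (n + 1 : ℕ) := by
    rw [← sum_range_reflect]
    refine sum_congr rfl fun n hn => ?_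
    have hadd : m + (m - 1 - n) + 1 + (n + 1) = p := by grind
    have hneg : ((m + (m - 1 - n) + 1 : ℕ) : ZMod p) = -(n + 1 : ℕ) :=
      eq_neg_of_add_eq_zero_left (by rw [← Nat.cast_add, hadd, ZMod.natCast_self])
    rw [hneg, hF]
  have lower_half : ∑ n ∈ Icc 1 ((p - 1) / 2), F n = ∑ n ∈ range m, F (n + 1 : ℕ) := by
    rw [show (p - 1) / 2 = m by lia, ← Ico_add_one_right_eq_Icc, sum_Ico_eq_sum_range]
    simp only [Nat.add_sub_cancel, add_comm 1]
  rw [sum_zmod_eq_sum_range_s10, show range p = range (m + m + 1) by rw [hm, two_mul],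
    sum_range_succ', sum_range_add, upper_half, lower_half, two_nsmul, Nat.cast_zero, add_comm]

theorem sum_comp_mul_sq_of_isSquare {R : Type*} [CommMonoid R] [Fintype R] (F : R → M) {a : R}
    (hunit : IsUnit a) (hsq : IsSquare a) : ∑ x, F (a * x ^ 2) = ∑ x, F (x ^ 2) := by
  obtain ⟨s, rfl⟩ := hsq
  obtain ⟨u, rfl⟩ : IsUnit s := isUnit_of_mul_isUnit_left hunit
  refine Fintype.sum_equiv u.mulLeft _ _ fun x => ?_
  rw [Units.mulLeft_apply, mul_pow, pow_two (u : R)]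

end Sums

section Cotangent

theorem cot_neg (x : ℝ) : Real.cot (-x) = -Real.cot x := by
  rw [← Real.tan_inv_eq_cot, Real.tan_neg, inv_neg, Real.tan_inv_eq_cot]

theorem cot_pi_mul_periodic : Function.Periodic (fun x : ℝ => Real.cot (Real.pi * x)) 1 := by
  intro x
  simp only [mul_add, mul_one, ← Real.tan_inv_eq_cot, Real.tan_add_pi]

theorem tan_eq_cot_sub_two_mul_cot (x : ℝ) : Real.tan x = Real.cot x - 2 * Real.cot (2 * x) := by
  rw [← Real.tan_inv_eq_cot, ← Real.tan_inv_eq_cot, Real.tan_two_mul, inv_div]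
  by_cases h : Real.tan x = 0
  · simp [h]
  · field_simp
    ring

end Cotangent

section ResidueSums

variable {p : ℕ} [NeZero p]

/-- The function `a ↦ cot (π a / p)` on residues modulo `p`, with the value `0` at `a = 0`. It is
pulled back from `ℝ / ℤ`, to which `x ↦ cot (π x)` descends. -/
noncomputable def residueCot (a : ZMod p) : ℝ :=
  cot_pi_mul_periodic.lift (ZMod.toAddCircle a)

theorem residueCot_intCast (k : ℤ) :
    residueCot (k : ZMod p) = Real.cot (Real.pi * k / p) := by
  rw [residueCot, ZMod.toAddCircle_intCast, mul_div_assoc]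
  exact cot_pi_mul_periodic.lift_coe _

theorem residueCot_natCast (k : ℕ) :
    residueCot (k : ZMod p) = Real.cot (Real.pi * k / p) :=
  mod_cast residueCot_intCast (p := p) k

theorem residueCot_zero : residueCot (0 : ZMod p) = 0 := by
  simpa [Real.cot_eq_cos_div_sin] using residueCot_natCast (p := p) 0

theorem residueCot_neg (a : ZMod p) : residueCot (-a) = -residueCot a := by
  obtain ⟨k, rfl⟩ := ZMod.intCast_surjective a
  rw [← Int.cast_neg, residueCot_intCast, residueCot_intCast, Int.cast_neg, mul_neg, neg_div,
    cot_neg]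

/-- The sum `S a = ∑ cot (π a x² / p)` over all residues `x` modulo `p`; the argument `x = 0`,
where the cotangent has its pole, contributes `0`. -/
noncomputable def quadraticCotSum (a : ZMod p) : ℝ :=
  ∑ x : ZMod p, residueCot (a * x ^ 2)

theorem quadraticCotSum_neg (a : ZMod p) : quadraticCotSum (-a) = -quadraticCotSum a := by
  simp only [quadraticCotSum, neg_mul, residueCot_neg, sum_neg_distrib]

theorem quadraticCotSum_of_isSquare {a : ZMod p} (hunit : IsUnit a) (hsq : IsSquare a) :
    quadraticCotSum a = quadraticCotSum (1 : ZMod p) := by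
  simpa only [quadraticCotSum, one_mul] using
    sum_comp_mul_sq_of_isSquare residueCot hunit hsq

theorem quadraticCotSum_natCast (hp : Odd p) (a : ℕ) :
    quadraticCotSum (a : ZMod p) =
      2 * ∑ n ∈ Icc 1 ((p - 1) / 2), Real.cot (a * (Real.pi * (n : ℝ) ^ 2 / p)) := by
  have heven : Function.Even fun x : ZMod p => residueCot ((a : ZMod p) * x ^ 2) :=
    fun x => by simp only [neg_sq]
  rw [quadraticCotSum, sum_zmod_eq_add_two_nsmul_sum_Icc_of_even hp heven, zero_pow two_ne_zero,
    mul_zero, residueCot_zero, zero_add, nsmul_eq_mul, Nat.cast_two]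
  congr 1
  refine sum_congr rfl fun n _ => ?_
  rw [← Nat.cast_pow, ← Nat.cast_mul, residueCot_natCast]
  congr 1
  push_cast
  ring

theorem two_mul_C (hp : Odd p) : 2 * C p = √p * quadraticCotSum (1 : ZMod p) := by
  have hS := quadraticCotSum_natCast hp 1
  simp only [Nat.cast_one, one_mul] at hS
  rw [C, hS, mul_left_comm]

theorem T_eq_C_sub (hp : Odd p) : T p = C p - √p * quadraticCotSum (2 : ZMod p) := by
  have hS := quadraticCotSum_natCast hp 2
  rw [Nat.cast_two, Nat.cast_two] at hS
  simp only [T, C, hS, tan_eq_cot_sub_two_mul_cot, sum_sub_distrib, ← mul_sum, mul_sub]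

end ResidueSums

theorem C_T_relation_general (p : ℕ) (hsqf : Squarefree p) (hodd : Odd p) :
    (IsSquare (2 : ZMod p) → C p = -T p) ∧ (IsSquare (-2 : ZMod p) → C p = T p / 3) := by
  have : NeZero p := ⟨hsqf.ne_zero⟩
  have hunit : IsUnit (2 : ZMod p) := by
    simpa using (ZMod.isUnit_iff_coprime 2 p).2 hodd.coprime_two_left
  have hC := two_mul_C hodd
  have hT := T_eq_C_sub hodd
  constructor
  · intro hsq
    rw [quadraticCotSum_of_isSquare hunit hsq] at hT
    linarith
  · intro hsq
    have hS : -quadraticCotSum (2 : ZMod p) = quadraticCotSum (1 : ZMod p) := by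
      rw [← quadraticCotSum_neg, quadraticCotSum_of_isSquare hunit.neg hsq]
    rw [← hS] at hC
    linarith

theorem C_T_relation (p : ℕ) (hp : p.Prime) (h3 : p % 4 = 3) :
    (p % 8 = 7 → C p = -T p) ∧ (p % 8 = 3 → C p = T p / 3) := by
  have : Fact p.Prime := ⟨hp⟩
  have hp2 : p ≠ 2 := by lia
  obtain ⟨two_square, neg_two_square⟩ :=
    C_T_relation_general p hp.prime.squarefree (hp.odd_of_ne_two hp2)
  exact ⟨fun h => two_square ((ZMod.exists_sq_eq_two_iff hp2).2 (.inr h)),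
    fun h => neg_two_square ((ZMod.exists_sq_eq_neg_two_iff hp2).2 (.inr h))⟩
end

section
/- Let p be a prime with p ≡ 3 (mod 4). Then the class number h(−p) of the imaginary quadratic number field ℚ(√(−p)) is odd. -/
/-!
Write `σ` for the conjugation of `O = 𝓞 K`. An ideal whose square is principal is equivalent to its
conjugate, and an explicit form of Hilbert 90, available because norms are nonnegative, replaces it
by an equivalent ideal `J` with `σ J ⊆ J`. Such a `J` is an integer multiple of an ideal containing
`√(-p)`, because `x - σ x` is an integer multiple of `√(-p)` for every `x ∈ O`. The only ideals
containing `√(-p)` are `(1)` and `(√(-p))`, so `J` is principal, and the class group has no element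
of order two.
-/

open NumberField

section Conjugation

variable {R O : Type*} [CommRing R] [CommRing O] [Algebra R O] {σ : O →ₐ[R] O}

theorem eq_trace_mul_add {ω : O} (hω : ω + σ ω = 1) (x : O) :
    x = ω * x + σ (ω * x) + σ ω * (x - σ x) := by
  rw [map_mul]
  linear_combination (-x) * hω

theorem ne_zero_of_sq_eq_algebraMap [FaithfulSMul R O] {α : O} {D : R}
    (hα : α ^ 2 = algebraMap R O D) (hD : ¬IsSquare D) : α ≠ 0 := by
  rintro rfl
  rw [zero_pow two_ne_zero, eq_comm, FaithfulSMul.algebraMap_eq_zero_iff R O] at hα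
  exact hD (hα ▸ IsSquare.zero)

section StableIdeal

variable [IsDomain O] {α ω : O}

theorem add_map_eq_one_of_two_mul_eq (h2 : (2 : O) ≠ 0) (hσα : σ α = -α) (hω : 2 * ω = 1 + α) :
    ω + σ ω = 1 := by
  have hσω : 2 * σ ω = 1 - α := by
    simpa only [map_mul, map_add, map_ofNat, map_one, hσα, ← sub_eq_add_neg] using congrArg σ hω
  apply mul_left_cancel₀ h2
  linear_combination hω + hσω

theorem algebraMap_dvd_of_forall_dvd (hα0 : α ≠ 0) (hσα : σ α = -α) (hω : ω + σ ω = 1)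
    (hsub : ∀ x, ∃ v : R, x - σ x = v • α) {J : Ideal O} {c : R}
    (hc : ∀ x ∈ J, ∀ v : R, x - σ x = v • α → c ∣ v) {x : O} (hx : x ∈ J) :
    algebraMap R O c ∣ x := by
  obtain ⟨v, hv⟩ := hsub x
  obtain ⟨t, ht⟩ := hsub (α * (ω * x))
  have ht_trace : algebraMap R O t = ω * x + σ (ω * x) := by
    apply mul_left_cancel₀ hα0
    rw [mul_comm, ← Algebra.smul_def, ← ht, map_mul σ α, hσα]
    ring
  have hcv : c ∣ v := hc x hx v hv
  have hct : c ∣ t := hc _ (J.mul_mem_left _ (J.mul_mem_left _ hx)) t ht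
  rw [eq_trace_mul_add hω x, ← ht_trace, hv, Algebra.smul_def]
  exact dvd_add (map_dvd _ hct) (((map_dvd _ hcv).mul_right α).mul_left (σ ω))

theorem exists_eq_span_mul_of_forall_map_mem [IsPrincipalIdealRing R] (hα0 : α ≠ 0)
    (hσα : σ α = -α) (hω : ω + σ ω = 1) (hsub : ∀ x, ∃ v : R, x - σ x = v • α)
    {J : Ideal O} (hJ : ∀ x ∈ J, σ x ∈ J) :
    ∃ (c : R) (J' : Ideal O), J = Ideal.span {algebraMap R O c} * J' ∧ α ∈ J' := by
  let V : Ideal R := ((J.restrictScalars R).map (LinearMap.id - σ.toLinearMap)).comap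
    (LinearMap.toSpanSingleton R O α)
  have mem_V {v : R} : v ∈ V ↔ ∃ x ∈ J, x - σ x = v • α := by simp [V]
  obtain ⟨c, hc : V = Ideal.span {c}⟩ := IsPrincipalIdealRing.principal V
  have c_dvd_coeff (x : O) (hx : x ∈ J) (v : R) (hv : x - σ x = v • α) : c ∣ v :=
    Ideal.mem_span_singleton.mp (hc ▸ mem_V.mpr ⟨x, hx, hv⟩)
  refine ⟨c, Submodule.comap (LinearMap.mulLeft O (algebraMap R O c)) J, ?_, ?_⟩
  · ext x
    rw [Ideal.mem_span_singleton_mul]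
    refine ⟨fun hx ↦ ?_, ?_⟩
    · obtain ⟨y, rfl⟩ := algebraMap_dvd_of_forall_dvd hα0 hσα hω hsub c_dvd_coeff hx
      exact ⟨y, hx, rfl⟩
    · rintro ⟨y, hy, rfl⟩
      exact hy
  · have hcV : c ∈ V := hc.ge (Ideal.mem_span_singleton_self c)
    obtain ⟨x, hx, hxc⟩ := mem_V.mp hcV
    change algebraMap R O c * α ∈ J
    rw [← Algebra.smul_def, ← hxc]
    exact J.sub_mem hx (hJ x hx)

end StableIdeal

/-- `σ` is the conjugation of the quadratic ring extension `O` of `R`: an involution over `R` whose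
fixed elements all come from `R`. -/
structure IsConjugation (σ : O →ₐ[R] O) : Prop where
  involutive : Function.Involutive σ
  exists_algebraMap_eq : ∀ x, σ x = x → ∃ r, algebraMap R O r = x

theorem exists_isConjugation_of_card_eq_two (G : Type*) [Group G] [MulSemiringAction G O]
    [SMulCommClass G R O] [Algebra.IsInvariant R O G] (hG : Nat.card G = 2) :
    ∃ σ : O →ₐ[R] O, IsConjugation σ := by
  obtain ⟨g, hg, hg_unique⟩ := (Nat.card_eq_two_iff' (1 : G)).mp hG
  have hgg : g * g = 1 := by
    by_contra h
    exact hg (mul_eq_left.mp (hg_unique _ h))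
  refine ⟨MulSemiringAction.toAlgHom R O g, fun x ↦ ?_, fun x hx ↦ ?_⟩
  · simp [smul_smul, hgg]
  · refine Algebra.IsInvariant.isInvariant (G := G) x fun h ↦ ?_
    by_cases h1 : h = 1
    · rw [h1, one_smul]
    · rw [hg_unique h h1]
      exact hx

namespace IsConjugation

variable (hσ : IsConjugation σ)
include hσ

theorem exists_trace (x : O) : ∃ t, algebraMap R O t = x + σ x :=
  hσ.exists_algebraMap_eq _ (by rw [map_add, hσ.involutive, add_comm])

theorem exists_norm (x : O) : ∃ n, algebraMap R O n = x * σ x :=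
  hσ.exists_algebraMap_eq _ (by rw [map_mul, hσ.involutive, mul_comm])

theorem exists_sub_algebraMap_mem_span {α ω : O} (hω : ω + σ ω = 1)
    (hsub : ∀ x, ∃ v : R, x - σ x = v • α) (x : O) :
    ∃ t, x - algebraMap R O t ∈ Ideal.span {α} := by
  obtain ⟨t, ht⟩ := hσ.exists_trace (ω * x)
  obtain ⟨v, hv⟩ := hsub x
  have hxt : x - algebraMap R O t = σ ω * v • α := by
    rw [sub_eq_iff_eq_add', ht, ← hv, ← eq_trace_mul_add hω]
  refine ⟨t, ?_⟩
  rw [hxt, mul_smul_comm]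
  exact Submodule.smul_of_tower_mem _ v
    (Ideal.mul_mem_left _ _ (Ideal.mem_span_singleton_self α))

theorem eq_top_or_eq_span_of_mem [IsPrincipalIdealRing R] {α ω : O} {D : R}
    (hα : α ^ 2 = algebraMap R O D) (hD : Irreducible D) (hω : ω + σ ω = 1)
    (hsub : ∀ x, ∃ v : R, x - σ x = v • α) {J : Ideal O} (hJ : α ∈ J) :
    J = ⊤ ∨ J = Ideal.span {α} := by
  have hle : Ideal.span {α} ≤ J := (Ideal.span_singleton_le_iff_mem J).mpr hJ
  have hDJ : Ideal.span {D} ≤ J.comap (algebraMap R O) := by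
    rw [Ideal.span_singleton_le_iff_mem, Ideal.mem_comap, ← hα]
    exact Ideal.pow_mem_of_mem J hJ 2 two_pos
  have hmax : (Ideal.span {D}).IsMaximal := PrincipalIdealRing.isMaximal_of_irreducible hD
  rcases hmax.out.le_iff.mp hDJ with htop | hcomap
  · exact .inl (Ideal.comap_eq_top_iff.mp htop)
  · refine .inr (le_antisymm (fun x hx ↦ ?_) hle)
    obtain ⟨t, ht⟩ := hσ.exists_sub_algebraMap_mem_span hω hsub x
    have htJ : t ∈ J.comap (algebraMap R O) := (Submodule.sub_mem_iff_right J hx).mp (hle ht)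
    rw [hcomap, Ideal.mem_span_singleton] at htJ
    have hαt : α ∣ algebraMap R O t := (Dvd.intro_left α (by rw [← sq, hα])).trans (map_dvd _ htJ)
    exact (Submodule.sub_mem_iff_left _ (Ideal.mem_span_singleton.mpr hαt)).mp ht

variable [FaithfulSMul R O]

theorem norm_nonneg [LinearOrder R] [IsStrictOrderedRing R] {α x : O} {D n : R}
    (hα : α ^ 2 = algebraMap R O D) (hD : D ≤ 0) (hsub : ∃ v : R, x - σ x = v • α)
    (hn : algebraMap R O n = x * σ x) : 0 ≤ n := by
  obtain ⟨t, ht⟩ := hσ.exists_trace x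
  obtain ⟨v, hv⟩ := hsub
  have h4n : 4 * n = t ^ 2 - D * v ^ 2 := by
    apply FaithfulSMul.algebraMap_injective R O
    rw [Algebra.smul_def] at hv
    simp only [map_mul, map_sub, map_pow, map_ofNat, hn, ht, ← hα]
    linear_combination (-(x - σ x) - algebraMap R O v * α) * hv
  nlinarith [sq_nonneg t, mul_nonneg (neg_nonneg.mpr hD) (sq_nonneg v)]

variable [IsDomain O]

theorem algebraMap_dvd_algebraMap {a b : R} : algebraMap R O a ∣ algebraMap R O b ↔ a ∣ b := by
  refine ⟨fun ⟨z, hz⟩ ↦ ?_, map_dvd _⟩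
  have hinj := FaithfulSMul.algebraMap_injective R O
  rcases eq_or_ne a 0 with rfl | ha
  · rw [map_zero, zero_mul, map_eq_zero_iff _ hinj] at hz
    simp [hz]
  have hz_fixed : σ z = z := by
    apply mul_left_cancel₀ ((map_ne_zero_iff _ hinj).mpr ha)
    rw [← hz, ← σ.commutes a, ← map_mul, ← hz, σ.commutes]
  obtain ⟨c, rfl⟩ := hσ.exists_algebraMap_eq z hz_fixed
  exact ⟨c, hinj (by rw [hz, map_mul])⟩

theorem map_eq_neg_of_sq_eq {α : O} {D : R} (hα : α ^ 2 = algebraMap R O D) (hD : ¬IsSquare D) :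
    σ α = -α := by
  have hsq : σ α ^ 2 = α ^ 2 := by rw [← map_pow, hα, σ.commutes]
  refine (sq_eq_sq_iff_eq_or_eq_neg.mp hsq).resolve_left fun h ↦ hD ?_
  obtain ⟨r, rfl⟩ := hσ.exists_algebraMap_eq α h
  refine ⟨r, FaithfulSMul.algebraMap_injective R O ?_⟩
  rw [← hα, ← map_pow, sq]

theorem exists_sub_map_eq_smul {α : O} {D : R} (hα : α ^ 2 = algebraMap R O D)
    (hD : IsRadical D) (hD_sq : ¬IsSquare D) (x : O) : ∃ v : R, x - σ x = v • α := by
  have hσα := hσ.map_eq_neg_of_sq_eq hα hD_sq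
  obtain ⟨a, ha⟩ : ∃ a, algebraMap R O a = α * (x - σ x) :=
    hσ.exists_algebraMap_eq _ (by rw [map_mul, map_sub, hσ.involutive, hσα]; ring)
  obtain ⟨b, hb⟩ : ∃ b, algebraMap R O b = (x - σ x) ^ 2 :=
    hσ.exists_algebraMap_eq _ (by rw [map_pow, map_sub, hσ.involutive]; ring)
  have hab : a ^ 2 = D * b := by
    apply FaithfulSMul.algebraMap_injective R O
    rw [map_pow, map_mul, ha, hb, ← hα, mul_pow]
  obtain ⟨v, rfl⟩ := hD 2 a ⟨b, hab⟩
  refine ⟨v, mul_left_cancel₀ (ne_zero_of_sq_eq_algebraMap hα hD_sq) ?_⟩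
  rw [← ha, map_mul, ← hα, Algebra.smul_def]
  ring

theorem isPrincipal_of_forall_map_mem [IsPrincipalIdealRing R] {α ω : O} {D : R}
    (hα : α ^ 2 = algebraMap R O D) (hD : Prime D) (hω : ω + σ ω = 1) {J : Ideal O}
    (hJ : ∀ x ∈ J, σ x ∈ J) : J.IsPrincipal := by
  have : IsDomain R := (FaithfulSMul.algebraMap_injective R O).isDomain
  have hα0 : α ≠ 0 := ne_zero_of_sq_eq_algebraMap hα hD.not_isSquare
  have hσα : σ α = -α := hσ.map_eq_neg_of_sq_eq hα hD.not_isSquare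
  have hsub := hσ.exists_sub_map_eq_smul hα hD.isRadical hD.not_isSquare
  obtain ⟨c, J', rfl, hαJ'⟩ := exists_eq_span_mul_of_forall_map_mem hα0 hσα hω hsub hJ
  rcases hσ.eq_top_or_eq_span_of_mem hα hD.irreducible hω hsub hαJ' with rfl | rfl
  · exact ⟨algebraMap R O c, Ideal.mul_top _⟩
  · exact ⟨algebraMap R O c * α, Ideal.span_singleton_mul_span_singleton _ _⟩

end IsConjugation

end Conjugation

section PrincipalSquare

variable {O : Type*} [CommRing O] {σ : O →+* O}

-- Hilbert 90 for `δ / β`, up to the sign that occurs where the usual `γ = β + σ δ` vanishes.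
theorem exists_associated_map_mul (hσ : Function.Involutive σ) {β δ : O} (hδ : δ ≠ 0)
    (h : β * σ β = δ * σ δ) : ∃ γ ≠ 0, Associated (σ γ * β) (γ * δ) := by
  by_cases hγ : β + σ δ = 0
  · refine ⟨σ δ, (map_ne_zero_iff σ hσ.injective).mpr hδ, ?_⟩
    rw [hσ, eq_neg_of_add_eq_zero_left hγ, mul_neg, mul_comm δ]
    exact (Associated.refl _).neg_left
  · refine ⟨β + σ δ, hγ, .of_eq ?_⟩
    rw [map_add, hσ]
    linear_combination h

theorem ideal_map_map_eq_self_of_involutive (hσ : Function.Involutive σ) (I : Ideal O) :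
    (I.map σ).map σ = I := by
  rw [Ideal.map_map, show σ.comp σ = .id O from RingHom.ext hσ, Ideal.map_id]

variable [IsDomain O]

theorem associated_mul_map (hσ : Function.Involutive σ) {I : Ideal O} {β δ : O}
    (hδ : I ^ 2 = Ideal.span {δ}) (hβ : I * I.map σ = Ideal.span {β}) :
    Associated (β * σ β) (δ * σ δ) := by
  refine Ideal.span_singleton_eq_span_singleton.mp ?_
  calc Ideal.span {β * σ β}
      = (I * I.map σ) * (I * I.map σ).map σ := by
        rw [hβ, Ideal.map_span, Set.image_singleton, Ideal.span_singleton_mul_span_singleton]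
    _ = I ^ 2 * (I ^ 2).map σ := by
        rw [Ideal.map_mul, ideal_map_map_eq_self_of_involutive hσ, Ideal.map_pow]
        ring
    _ = Ideal.span {δ * σ δ} := by
        rw [hδ, Ideal.map_span, Set.image_singleton, Ideal.span_singleton_mul_span_singleton]

theorem map_span_mul_eq_of_associated {I : Ideal O} {β γ δ : O} (hδ0 : δ ≠ 0)
    (hδ : I ^ 2 = Ideal.span {δ}) (hβ : I * I.map σ = Ideal.span {β})
    (hγ : Associated (σ γ * β) (γ * δ)) :
    (Ideal.span {γ} * I).map σ = Ideal.span {γ} * I := by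
  refine (Ideal.span_singleton_mul_right_inj hδ0).mp ?_
  calc Ideal.span {δ} * (Ideal.span {γ} * I).map σ
      = Ideal.span {σ γ} * (I * I.map σ) * I := by
        rw [← hδ, Ideal.map_mul, Ideal.map_span, Set.image_singleton]
        ring
    _ = Ideal.span {γ * δ} * I := by
        rw [hβ, Ideal.span_singleton_mul_span_singleton,
          Ideal.span_singleton_eq_span_singleton.mpr hγ]
    _ = Ideal.span {δ} * (Ideal.span {γ} * I) := by
        rw [← Ideal.span_singleton_mul_span_singleton]
        ring

theorem isPrincipal_of_isPrincipal_span_mul {I : Ideal O} {γ : O} (hγ : γ ≠ 0)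
    (h : (Ideal.span {γ} * I).IsPrincipal) : I.IsPrincipal := by
  obtain ⟨g, hg : _ = Ideal.span {g}⟩ := h
  obtain ⟨z, -, rfl⟩ := Ideal.mem_span_singleton_mul.mp (hg ▸ Ideal.mem_span_singleton_self g)
  refine ⟨z, (Ideal.span_singleton_mul_right_inj hγ).mp ?_⟩
  rw [hg, ← Ideal.span_singleton_mul_span_singleton]

theorem isPrincipal_of_isPrincipal_sq_of_involutive (hσ : Function.Involutive σ)
    (hnorm : ∀ x y, Associated (x * σ x) (y * σ y) → x * σ x = y * σ y)
    (hstable : ∀ J : Ideal O, (∀ x ∈ J, σ x ∈ J) → J.IsPrincipal)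
    {I : Ideal O} (hI : (I ^ 2).IsPrincipal) : I.IsPrincipal := by
  obtain ⟨δ, hδ : I ^ 2 = Ideal.span {δ}⟩ := hI
  rcases eq_or_ne δ 0 with rfl | hδ0
  · rw [Ideal.span_singleton_zero] at hδ
    rw [(pow_eq_zero_iff two_ne_zero).mp hδ]
    exact bot_isPrincipal
  obtain ⟨β, hβ⟩ := hstable (I * I.map σ) fun x hx ↦ by
    simpa only [Ideal.map_mul, ideal_map_map_eq_self_of_involutive hσ, mul_comm (I.map σ)] using
      Ideal.mem_map_of_mem σ hx
  obtain ⟨γ, hγ0, hγ⟩ :=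
    exists_associated_map_mul hσ hδ0 (hnorm β δ (associated_mul_map hσ hδ hβ))
  have hmap := map_span_mul_eq_of_associated hδ0 hδ hβ hγ
  exact isPrincipal_of_isPrincipal_span_mul hγ0
    (hstable _ fun x hx ↦ hmap.le (Ideal.mem_map_of_mem σ hx))

end PrincipalSquare

theorem IsConjugation.eq_of_associated_norm {O : Type*} [CommRing O] [IsDomain O]
    [FaithfulSMul ℤ O] {σ : O →ₐ[ℤ] O} (hσ : IsConjugation σ) {α : O} {D : ℤ}
    (hα : α ^ 2 = algebraMap ℤ O D) (hD : D ≤ 0) (hsub : ∀ x, ∃ v : ℤ, x - σ x = v • α)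
    (x y : O) (h : Associated (x * σ x) (y * σ y)) : x * σ x = y * σ y := by
  obtain ⟨m, hm⟩ := hσ.exists_norm x
  obtain ⟨n, hn⟩ := hσ.exists_norm y
  have hmn : m = n := by
    rw [← hm, ← hn] at h
    exact Int.eq_of_associated_of_nonneg
      (associated_of_dvd_dvd (hσ.algebraMap_dvd_algebraMap.mp h.dvd)
        (hσ.algebraMap_dvd_algebraMap.mp h.symm.dvd))
      (hσ.norm_nonneg hα hD (hsub x) hm) (hσ.norm_nonneg hα hD (hsub y) hn)
  rw [← hm, ← hn, hmn]

theorem IsConjugation.isPrincipal_of_isPrincipal_sq {O : Type*} [CommRing O] [IsDomain O]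
    [FaithfulSMul ℤ O] {σ : O →ₐ[ℤ] O} (hσ : IsConjugation σ) {α ω : O} {D : ℤ}
    (hα : α ^ 2 = algebraMap ℤ O D) (hD : Prime D) (hD0 : D ≤ 0) (hω : 2 * ω = 1 + α)
    {I : Ideal O} (hI : (I ^ 2).IsPrincipal) : I.IsPrincipal := by
  have h2 : (2 : O) ≠ 0 := by
    simpa using (FaithfulSMul.algebraMap_eq_zero_iff ℤ O (r := 2)).not.mpr two_ne_zero
  have hσω : ω + σ ω = 1 :=
    add_map_eq_one_of_two_mul_eq h2 (hσ.map_eq_neg_of_sq_eq hα hD.not_isSquare) hω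
  have hsub := hσ.exists_sub_map_eq_smul hα hD.isRadical hD.not_isSquare
  exact isPrincipal_of_isPrincipal_sq_of_involutive (σ := σ.toRingHom) hσ.involutive
    (hσ.eq_of_associated_norm hα hD0 hsub)
    (fun _ ↦ hσ.isPrincipal_of_forall_map_mem hα hD hσω) hI

theorem exists_two_mul_eq_one_add {O : Type*} [CommRing O] [IsDomain O] [IsIntegrallyClosed O]
    {α m : O} (h2 : (2 : O) ≠ 0) (hα : α ^ 2 = 1 - 4 * m) : ∃ ω, 2 * ω = 1 + α := by
  have hinj := IsFractionRing.injective O (FractionRing O)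
  set a := algebraMap O (FractionRing O) α
  have h2' : (2 : FractionRing O) ≠ 0 := by
    rwa [← map_ofNat (algebraMap O (FractionRing O)), map_ne_zero_iff _ hinj]
  have ha : a ^ 2 = 1 - 4 * algebraMap O (FractionRing O) m := by
    rw [← map_pow, hα, map_sub, map_mul, map_one, map_ofNat]
  have hint : IsIntegral O ((1 + a) / 2) := by
    refine ⟨Polynomial.X ^ 2 - Polynomial.X + Polynomial.C m, by monicity!, ?_⟩
    simp only [Polynomial.eval₂_add, Polynomial.eval₂_sub, Polynomial.eval₂_pow,
      Polynomial.eval₂_X, Polynomial.eval₂_C]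
    field_simp
    linear_combination ha
  obtain ⟨ω, hω⟩ := IsIntegrallyClosed.isIntegral_iff.mp hint
  refine ⟨ω, hinj ?_⟩
  rw [map_mul, hω, map_add, map_one, map_ofNat, mul_div_cancel₀ _ h2']

theorem odd_card_classGroup_of_forall_isPrincipal_sq {O : Type*} [CommRing O]
    [IsDedekindDomain O] [Finite (ClassGroup O)]
    (h : ∀ I : Ideal O, (I ^ 2).IsPrincipal → I.IsPrincipal) : Odd (Nat.card (ClassGroup O)) := by
  rw [← Nat.not_even_iff_odd, even_iff_two_dvd]
  intro hdvd
  obtain ⟨C, hC⟩ := exists_prime_orderOf_dvd_card' 2 hdvd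
  obtain ⟨⟨I, hI⟩, rfl⟩ := ClassGroup.mk0_surjective C
  obtain ⟨hsq, hne⟩ := orderOf_eq_prime_iff.mp hC
  rw [← map_pow, SubmonoidClass.mk_pow, ClassGroup.mk0_eq_one_iff] at hsq
  exact hne ((ClassGroup.mk0_eq_one_iff hI).mpr (h I hsq))

theorem exists_ringOfIntegers_pow_eq {K : Type*} [Field K] {n : ℕ} (hn : 0 < n) {a : K} {D : ℤ}
    (ha : a ^ n = algebraMap ℤ K D) : ∃ α : 𝓞 K, α ^ n = algebraMap ℤ (𝓞 K) D := by
  have ha_int : IsIntegral ℤ a := .of_pow hn (ha ▸ isIntegral_algebraMap)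
  exact ⟨⟨a, ha_int⟩, RingOfIntegers.ext ha⟩

theorem classNumber_odd (p : ℕ) (hp : p.Prime) (h3 : p % 4 = 3)
    (K : Type) [Field K] [NumberField K]
    (hdeg : Module.finrank ℚ K = 2) (hroot : ∃ α : K, α ^ 2 = -(p : K)) :
    Odd (NumberField.classNumber K) := by
  obtain ⟨a, ha⟩ := hroot
  obtain ⟨α, hα⟩ := exists_ringOfIntegers_pow_eq (D := -p) two_pos (by simpa using ha)
  obtain ⟨m, hm⟩ : ∃ m : ℤ, (-p : ℤ) = 1 - 4 * m := ⟨p / 4 + 1, by omega⟩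
  obtain ⟨ω, hω⟩ : ∃ ω, 2 * ω = 1 + α :=
    exists_two_mul_eq_one_add (m := algebraMap ℤ (𝓞 K) m) two_ne_zero (by rw [hα, hm]; simp)
  have : Algebra.IsQuadraticExtension ℚ K := ⟨hdeg⟩
  have hcard : Nat.card Gal(K/ℚ) = 2 := by rw [IsGalois.card_aut_eq_finrank, hdeg]
  obtain ⟨σ, hσ⟩ := exists_isConjugation_of_card_eq_two (R := ℤ) (O := 𝓞 K) Gal(K/ℚ) hcard
  have hD : Prime (-p : ℤ) := (Nat.prime_iff_prime_int.mp hp).neg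
  rw [classNumber, ← Nat.card_eq_fintype_card]
  exact odd_card_classGroup_of_forall_isPrincipal_sq fun I ↦
    hσ.isPrincipal_of_isPrincipal_sq hα hD (by simp) hω
end
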